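/- arXiv:2412.12514 — 2 statements merged into one kernel-verified Lean document; each statement's English description precedes it below -/
import Mathlib

section
/- Let F_1,...,F_ℓ ∈ ℂ[x_1,...,x_k] be linearly independent polynomials such that λ_1 F_1 + ... + λ_ℓ F_ℓ is irreducible for general (λ_1,...,λ_ℓ) ∈ ℂ^ℓ. For n ≥ ℓ, introduce n disjoint sets of variables x_j = (x_{1j},...,x_{kj}) and form the ℓ×n matrix with entries F_i(x_j). Then the ideal of its maximal (ℓ×ℓ) minors in ℂ[x_{ij}] is a prime ideal of codimension n − ℓ + 1. -/
open MvPolynomial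

namespace MinorsPrime

/-- The ideal generated by the copies `f(x_j)`. -/
noncomputable def qI {k : ℕ} {P : Type*} [CommRing P] (f : MvPolynomial (Fin k) P) (n : ℕ) :
    Ideal (MvPolynomial (Fin k × Fin n) P) :=
  Ideal.span (Set.range fun j : Fin n => rename (fun a => (a, j)) f)

/-- Splitting off the zeroth block of indices. -/
def idxEquiv (k n : ℕ) : Fin k × Fin (n + 1) ≃ Fin k ⊕ Fin k × Fin n where
  toFun p := Fin.cases (Sum.inl p.1) (fun j => Sum.inr (p.1, j)) p.2
  invFun s := Sum.elim (fun a => (a, 0)) (fun p => (p.1, p.2.succ)) s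
  left_inv := by
    rintro ⟨a, j⟩
    refine Fin.cases ?_ (fun j => ?_) j <;> simp
  right_inv := by
    rintro (a | ⟨a, j⟩) <;> simp

/-- Splitting off the zeroth block of variables. -/
noncomputable def spl (k n : ℕ) (P : Type*) [CommRing P] :
    MvPolynomial (Fin k × Fin (n + 1)) P ≃ₐ[P]
      MvPolynomial (Fin k) (MvPolynomial (Fin k × Fin n) P) :=
  (renameEquiv P (idxEquiv k n)).trans (sumAlgEquiv P (Fin k) (Fin k × Fin n))

variable {k n : ℕ} {P : Type*} [CommRing P]

@[simp] lemma spl_X_zero (a : Fin k) : spl k n P (X (a, 0)) = X a := by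
  simp [spl, idxEquiv]

@[simp] lemma spl_X_succ (a : Fin k) (j : Fin n) : spl k n P (X (a, j.succ)) = C (X (a, j)) := by
  simp [spl, idxEquiv]

@[simp] lemma spl_C (c : P) : spl k n P (C c) = C (C c) := by
  rw [← MvPolynomial.algebraMap_eq, AlgEquiv.commutes]
  rfl

lemma spl_rename_zero (f : MvPolynomial (Fin k) P) :
    spl k n P (rename (fun a => (a, 0)) f) = map C f := by
  induction f using MvPolynomial.induction_on with
  | C a => simp
  | add p q hp hq => simp [hp, hq]
  | mul_X p i hp => simp [hp]

lemma spl_rename_succ' (f : MvPolynomial (Fin k × Fin n) P) :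
    spl k n P (rename (fun a => (a.1, a.2.succ)) f) = C f := by
  induction f using MvPolynomial.induction_on with
  | C a => simp
  | add p q hp hq => simp [hp, hq]
  | mul_X p i hp => simp [hp]

lemma spl_rename_succ (f : MvPolynomial (Fin k) P) (j : Fin n) :
    spl k n P (rename (fun a => (a, j.succ)) f) = C (rename (fun a => (a, j)) f) := by
  rw [← spl_rename_succ', rename_rename]; rfl

lemma spl_map {Q : Type*} [CommRing Q] (φ : P →+* Q) (g : MvPolynomial (Fin k × Fin (n + 1)) P) :
    spl k n Q (map φ g) = map (map φ) (spl k n P g) := by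
  induction g using MvPolynomial.induction_on with
  | C a => simp
  | add p q hp hq => simp [hp, hq]
  | mul_X p i hp =>
    obtain ⟨a, j⟩ := i
    refine Fin.cases ?_ (fun j => ?_) j <;> simp [hp]

lemma map_qI {Q : Type*} [CommRing Q] (φ : P →+* Q) (f : MvPolynomial (Fin k) P) (n : ℕ) :
    (qI f n).map (map φ) = qI (map φ f) n := by
  rw [qI, qI, Ideal.map_span, ← Set.range_comp]
  congr 2
  ext1 j
  simp [map_rename]

lemma mem_qI_map {Q : Type*} [CommRing Q] (φ : P →+* Q) {f : MvPolynomial (Fin k) P} {n : ℕ}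
    {g : MvPolynomial (Fin k × Fin n) P} (hg : g ∈ qI f n) : map φ g ∈ qI (map φ f) n := by
  rw [← map_qI]; exact Ideal.mem_map_of_mem _ hg

lemma symm_mem_qI (f : MvPolynomial (Fin k) P)
    {r : MvPolynomial (Fin k) (MvPolynomial (Fin k × Fin n) P)}
    (hr : r ∈ (qI f n).map (C (σ := Fin k))) : (spl k n P).symm r ∈ qI f (n + 1) := by
  have hle : (qI f n).map (C (σ := Fin k)) ≤
      (qI f (n + 1)).comap ((spl k n P).symm.toAlgHom.toRingHom) := by
    rw [qI, Ideal.map_span, Ideal.span_le]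
    rintro _ ⟨_, ⟨j, rfl⟩, rfl⟩
    change (spl k n P).symm (C (rename (fun a => (a, j)) f)) ∈ qI f (n + 1)
    rw [← spl_rename_succ, AlgEquiv.symm_apply_apply]
    exact Ideal.subset_span ⟨j.succ, rfl⟩
  exact hle hr

/-- Membership in `qI f (n+1)` is divisibility over the quotient by `qI f n`. -/
lemma mem_qI_succ (f : MvPolynomial (Fin k) P) (g : MvPolynomial (Fin k × Fin (n + 1)) P) :
    g ∈ qI f (n + 1) ↔ ∃ h : MvPolynomial (Fin k) (MvPolynomial (Fin k × Fin n) P ⧸ qI f n),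
      map (Ideal.Quotient.mk (qI f n)) (spl k n P g) =
        h * map ((Ideal.Quotient.mk (qI f n)).comp C) f := by
  have h0 : map (Ideal.Quotient.mk (qI f n)) (spl k n P (rename (fun a => (a, 0)) f)) =
      map ((Ideal.Quotient.mk (qI f n)).comp C) f := by
    rw [spl_rename_zero, map_map]
  constructor
  · intro hg
    have hle : qI f (n + 1) ≤ (Ideal.span {map ((Ideal.Quotient.mk (qI f n)).comp C) f}).comap
        ((map (σ := Fin k) (Ideal.Quotient.mk (qI f n))).comp
          ((spl k n P).toAlgHom : _ →+* _)) := by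
      rw [qI, Ideal.span_le]
      rintro _ ⟨j, rfl⟩
      refine Fin.cases ?_ (fun j => ?_) j
      · simp only [SetLike.mem_coe, Ideal.mem_comap]
        refine Ideal.subset_span ?_
        exact h0
      · simp only [SetLike.mem_coe, Ideal.mem_comap]
        have : ((map (σ := Fin k) (Ideal.Quotient.mk (qI f n))).comp
            ((spl k n P).toAlgHom : _ →+* _)) (rename (fun a => (a, j.succ)) f) = 0 := by
          change map (Ideal.Quotient.mk (qI f n)) (spl k n P _) = 0
          rw [spl_rename_succ, map_C, Ideal.Quotient.eq_zero_iff_mem.mpr, C_0]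
          exact Ideal.subset_span ⟨j, rfl⟩
        rw [this]; exact zero_mem _
    have := hle hg
    rw [Ideal.mem_comap, Ideal.mem_span_singleton'] at this
    obtain ⟨h, hh⟩ := this
    exact ⟨h, hh.symm⟩
  · rintro ⟨h, hh⟩
    obtain ⟨h1, rfl⟩ := map_surjective (σ := Fin k) _ (Ideal.Quotient.mk_surjective (I := qI f n)) h
    obtain ⟨h2, rfl⟩ := (spl k n P).surjective h1
    rw [← h0, ← map_mul, ← map_mul] at hh
    replace hh : map (Ideal.Quotient.mk (qI f n))
        (spl k n P (g - h2 * rename (fun a => (a, 0)) f)) = 0 := by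
      rw [map_sub, map_sub, hh, sub_self]
    have hk : spl k n P (g - h2 * rename (fun a => (a, 0)) f) ∈ (qI f n).map (C (σ := Fin k)) := by
      rw [← Ideal.mk_ker (I := qI f n), ← MvPolynomial.ker_map]
      exact hh
    have hk3 : g - h2 * rename (fun a => (a, 0)) f ∈ qI f (n + 1) := by
      have := symm_mem_qI f hk
      rwa [AlgEquiv.symm_apply_apply] at this
    have := add_mem hk3 (Ideal.mul_mem_left (qI f (n + 1)) h2
      (Ideal.subset_span ⟨0, rfl⟩ : rename (fun a => (a, 0)) f ∈ qI f (n + 1)))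
    simpa using this

end MinorsPrime

namespace MinorsPrime

lemma exists_point {K D : Type*} [Field K] [IsAlgClosed K] [CommRing D] [IsDomain D] [Algebra K D]
    [Algebra.FiniteType K D] (d : D) (hd : d ≠ 0) : ∃ ψ : D →ₐ[K] K, ψ d ≠ 0 := by
  have hJ : IsJacobsonRing D := isJacobsonRing_of_finiteType (A := K)
  have h0 : (⊥ : Ideal D).jacobson = ⊥ := by
    apply IsJacobsonRing.out hJ
    exact (Ideal.isPrime_bot : (⊥ : Ideal D).IsPrime).isRadical
  have hd' : d ∉ (⊥ : Ideal D).jacobson := by rw [h0]; simpa using hd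
  rw [Ideal.jacobson, Ideal.mem_sInf] at hd'
  push Not at hd'
  obtain ⟨M, ⟨-, hM⟩, hdM⟩ := hd'
  letI := Ideal.Quotient.field M
  have : Module.Finite K (D ⧸ M) := finite_of_finite_type_of_isJacobsonRing K (D ⧸ M)
  have hb : Function.Bijective (algebraMap K (D ⧸ M)) :=
    IsAlgClosed.algebraMap_bijective_of_isIntegral
  let e : K ≃ₐ[K] (D ⧸ M) := AlgEquiv.ofBijective (Algebra.ofId K (D ⧸ M)) hb
  refine ⟨(e.symm : (D ⧸ M) →ₐ[K] K).comp (Ideal.Quotient.mkₐ K M), ?_⟩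
  intro h
  apply hdM
  have h2 : e.symm (Ideal.Quotient.mk M d) = 0 := h
  rw [EmbeddingLike.map_eq_zero_iff] at h2
  exact Ideal.Quotient.eq_zero_iff_mem.mp h2

lemma coeff_zero_of_mul {K : Type*} [Field K] {k : ℕ} (m : MonomialOrder (Fin k))
    {f r h : MvPolynomial (Fin k) K} (hf : f ≠ 0)
    (hr : ∀ c ∈ r.support, ¬ (m.degree f ≤ c)) (h1 : r = h * f) : r = 0 := by
  by_contra hr0
  have hh : h ≠ 0 := by rintro rfl; exact hr0 (by rw [h1, zero_mul])
  apply hr _ (m.degree_mem_support hr0)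
  rw [h1, m.degree_mul hh hf]
  exact le_add_self

lemma domain_step {K D : Type*} [Field K] [IsAlgClosed K] [CommRing D] [IsDomain D] [Algebra K D]
    [Algebra.FiniteType K D] {k : ℕ} (f : MvPolynomial (Fin k) K) (hf : Irreducible f) :
    (Ideal.span {map (algebraMap K D) f}).IsPrime := by
  let m : MonomialOrder (Fin k) := MonomialOrder.degLex
  have hsp : ∀ (ψ : D →ₐ[K] K), map (ψ : D →+* K) (map (algebraMap K D) f) = f := by
    intro ψ
    rw [map_map, ψ.comp_algebraMap, Algebra.algebraMap_self, map_id]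
  have hinj : Function.Injective (algebraMap K D) := (algebraMap K D).injective
  have hdeg : m.degree (map (algebraMap K D) f) = m.degree f := by
    simp only [MonomialOrder.degree, support_map_of_injective _ hinj]
  have hu : IsUnit (m.leadingCoeff (map (algebraMap K D) f)) := by
    rw [MonomialOrder.leadingCoeff, hdeg, coeff_map]
    apply IsUnit.map
    rw [isUnit_iff_ne_zero]
    exact m.leadingCoeff_ne_zero_iff.mpr hf.ne_zero
  have hdiv : ∀ a : MvPolynomial (Fin k) D, ∃ h r, a = h * map (algebraMap K D) f + r ∧
      ∀ c ∈ r.support, ¬ (m.degree f ≤ c) := by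
    intro a
    obtain ⟨g, r, h1, -, h3⟩ := m.div (ι := Unit) (b := fun _ => map (algebraMap K D) f)
      (fun _ => hu) a
    refine ⟨g (), r, ?_, fun c hc => by simpa [hdeg] using h3 c hc ()⟩
    rw [h1, Finsupp.linearCombination_unique]
    simp
  have hprime : Prime f := hf.prime
  refine ⟨?_, ?_⟩
  · rw [Ne, Ideal.span_singleton_eq_top]
    intro hun
    obtain ⟨ψ, -⟩ := exists_point (K := K) (1 : D) one_ne_zero
    have := hun.map (map (σ := Fin k) (ψ : D →+* K))
    rw [hsp] at this
    exact hf.not_isUnit this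
  · intro a b hab
    obtain ⟨ha, ra, ea, hra⟩ := hdiv a
    obtain ⟨hb, rb, eb, hrb⟩ := hdiv b
    have hab2 : ∃ t, ra * rb = t * map (algebraMap K D) f := by
      obtain ⟨t, ht⟩ := Ideal.mem_span_singleton'.mp hab
      refine ⟨t - ha * b - ra * hb, ?_⟩
      rw [ea, eb] at ht
      rw [eb]
      linear_combination -ht
    obtain ⟨t, ht⟩ := hab2
    have key : ra = 0 ∨ rb = 0 := by
      by_contra! hne
      obtain ⟨c, hc⟩ := MvPolynomial.ne_zero_iff.mp hne.1
      obtain ⟨d, hd⟩ := MvPolynomial.ne_zero_iff.mp hne.2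
      obtain ⟨ψ, hψ⟩ := exists_point (K := K) (coeff c ra * coeff d rb) (mul_ne_zero hc hd)
      rw [map_mul] at hψ
      have h1 := congrArg (map (ψ : D →+* K)) ht
      rw [map_mul, map_mul, hsp] at h1
      have h2 : f ∣ map (ψ : D →+* K) ra * map (ψ : D →+* K) rb := ⟨_, h1.trans (mul_comm _ _)⟩
      have red : ∀ r : MvPolynomial (Fin k) D, (∀ c ∈ r.support, ¬ (m.degree f ≤ c)) →
          f ∣ map (ψ : D →+* K) r → map (ψ : D →+* K) r = 0 := by
        rintro r hr ⟨h, hh⟩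
        refine coeff_zero_of_mul m hf.ne_zero (fun c hc => hr c ?_) (hh.trans (mul_comm _ _))
        exact support_map_subset _ _ hc
      rcases hprime.dvd_or_dvd h2 with h3 | h3
      · have := congrArg (coeff c) (red _ hra h3)
        rw [coeff_map, coeff_zero] at this
        exact hψ (by rw [show ψ (coeff c ra) = 0 from this, zero_mul])
      · have := congrArg (coeff d) (red _ hrb h3)
        rw [coeff_map, coeff_zero] at this
        exact hψ (by rw [show ψ (coeff d rb) = 0 from this, mul_zero])
    rcases key with h | h
    · left; rw [ea, h, add_zero]; exact Ideal.mul_mem_left _ _ (Ideal.mem_span_singleton_self _)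
    · right; rw [eb, h, add_zero]; exact Ideal.mul_mem_left _ _ (Ideal.mem_span_singleton_self _)

lemma qI_prime {K : Type*} [Field K] [IsAlgClosed K] {k : ℕ} (f : MvPolynomial (Fin k) K)
    (hf : Irreducible f) (n : ℕ) : (qI f n).IsPrime := by
  induction n with
  | zero =>
    have : qI f 0 = ⊥ := by simp [qI]
    rw [this]; exact Ideal.isPrime_bot
  | succ n ih =>
    have hd : (Ideal.span {map ((Ideal.Quotient.mk (qI f n)).comp C) f}).IsPrime :=
      domain_step (D := MvPolynomial (Fin k × Fin n) K ⧸ qI f n) f hf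
    have : qI f (n + 1) = (Ideal.span {map ((Ideal.Quotient.mk (qI f n)).comp C) f}).comap
        ((map (σ := Fin k) (Ideal.Quotient.mk (qI f n))).comp
          ((spl k n K).toAlgHom : _ →+* _)) := by
      ext g
      rw [mem_qI_succ, Ideal.mem_comap, Ideal.mem_span_singleton']
      exact ⟨fun ⟨h, hh⟩ => ⟨h, hh.symm⟩, fun ⟨h, hh⟩ => ⟨h, hh.symm⟩⟩
    rw [this]
    exact Ideal.comap_isPrime _ _

end MinorsPrime

namespace MinorsPrime

lemma degree_eq_of {B : Type*} [CommRing B] {k : ℕ} (m : MonomialOrder (Fin k))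
    {f : MvPolynomial (Fin k) B} {d : Fin k →₀ ℕ} (hc : coeff d f ≠ 0)
    (hs : ∀ e ∈ f.support, m.toSyn e ≤ m.toSyn d) : m.degree f = d := by
  apply m.toSyn.injective
  apply le_antisymm
  · exact m.degree_le_iff.mpr hs
  · exact m.le_degree (mem_support_iff.mpr hc)

lemma lead {B : Type*} [CommRing B] {k : ℕ} (m : MonomialOrder (Fin k))
    {f h : MvPolynomial (Fin k) B} {d w : Fin k →₀ ℕ} (hc : coeff d f ∈ nonZeroDivisors B)
    (hs : ∀ e ∈ f.support, m.toSyn e ≤ m.toSyn d)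
    (hw : ∀ e ∈ (h * f).support, m.toSyn e ≤ m.toSyn w) :
    ∃ b, coeff w (h * f) = coeff d f * b ∧ (coeff w (h * f) ≠ 0 → d ≤ w) := by
  by_cases h0 : coeff w (h * f) = 0
  · exact ⟨0, by simp [h0], fun h => absurd h0 h⟩
  · have hB : Nontrivial B := ⟨_, _, h0⟩
    have hG := degree_eq_of m h0 hw
    have hf := degree_eq_of m (nonZeroDivisors.ne_zero hc) hs
    have hlc : m.leadingCoeff f ∈ nonZeroDivisors B := by rwa [MonomialOrder.leadingCoeff, hf]
    have hh : h ≠ 0 := by rintro rfl; simp at h0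
    have hd := m.degree_mul_of_right_mem_nonZeroDivisors hh hlc
    refine ⟨m.leadingCoeff h, ?_, fun _ => ?_⟩
    · rw [← hG]
      have := m.leadingCoeff_mul_of_right_mem_nonZeroDivisors (f := h) hlc
      rw [MonomialOrder.leadingCoeff] at this
      rw [this, mul_comm, MonomialOrder.leadingCoeff, hf]
    · rw [← hG, hd, hf]; exact le_add_self

lemma nzd_of {B : Type*} [CommRing B] {k : ℕ} (m : MonomialOrder (Fin k))
    {f : MvPolynomial (Fin k) B} {d : Fin k →₀ ℕ} (hc : IsUnit (coeff d f))
    (hs : ∀ e ∈ f.support, m.toSyn e ≤ m.toSyn d) : f ∈ nonZeroDivisors _ := by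
  nontriviality B
  apply m.mem_nonZeroDivisors_of_leadingCoeff_mem_nonZeroDivisors
  rw [MonomialOrder.leadingCoeff, degree_eq_of m hc.ne_zero hs]
  exact hc.mem_nonZeroDivisors

lemma C_mul_eq_zero_of {σ B : Type*} [CommRing B] (t : B) (ht : ∀ b, t * b = 0 → b = 0)
    (g : MvPolynomial σ B) (hg : C t * g = 0) : g = 0 := by
  ext c
  have := congrArg (coeff c) hg
  rw [coeff_C_mul, coeff_zero] at this
  rw [ht _ this, coeff_zero]

lemma torsion_step {B : Type*} [CommRing B] {k : ℕ} (m : MonomialOrder (Fin k))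
    (t : B) (ht : ∀ b, t * b = 0 → b = 0) (f0 f1 G h : MvPolynomial (Fin k) B)
    (d : Fin k →₀ ℕ) (hc : IsUnit (coeff d f1))
    (hsup : ∀ e ∈ f1.support, m.toSyn e ≤ m.toSyn d)
    (hh : C t * G = h * (C t * f0 + f1)) : ∃ h', G = h' * (C t * f0 + f1) := by
  have hdvd : C t ∣ h := by
    rw [C_dvd_iff_map_hom_eq_zero (Ideal.Quotient.mk (Ideal.span {t})) t (fun r' => by
      rw [Ideal.Quotient.eq_zero_iff_mem, Ideal.mem_span_singleton])]
    have h3 := congrArg (map (Ideal.Quotient.mk (Ideal.span {t}))) hh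
    have h4 : Ideal.Quotient.mk (Ideal.span {t}) t = 0 :=
      Ideal.Quotient.eq_zero_iff_mem.mpr (Ideal.mem_span_singleton_self t)
    rw [map_mul, map_mul, map_add, map_mul, map_C, h4, C_0, zero_mul, zero_mul, zero_add] at h3
    have hn : map (Ideal.Quotient.mk (Ideal.span {t})) f1 ∈ nonZeroDivisors _ := by
      refine nzd_of m (d := d) ?_ (fun e he => hsup e (support_map_subset _ _ he))
      rw [coeff_map]
      exact hc.map _
    exact (mul_right_mem_nonZeroDivisors_eq_zero_iff hn).mp h3.symm
  obtain ⟨h', rfl⟩ := hdvd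
  refine ⟨h', ?_⟩
  have h5 : C t * (G - h' * (C t * f0 + f1)) = 0 := by
    linear_combination hh
  exact sub_eq_zero.mp (C_mul_eq_zero_of t ht _ h5)

lemma torsion_free {O : Type*} [CommRing O] {k : ℕ} (m : MonomialOrder (Fin k))
    (s : O) (hs : ∀ b, s * b = 0 → b = 0)
    (f0 f1 f : MvPolynomial (Fin k) O) (hf : f = C s * f0 + f1)
    (d : Fin k →₀ ℕ) (hc : IsUnit (coeff d f1))
    (hsup : ∀ e ∈ f1.support, m.toSyn e ≤ m.toSyn d) (n : ℕ) :
    ∀ g : MvPolynomial (Fin k × Fin n) O, C s * g ∈ qI f n → g ∈ qI f n := by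
  induction n with
  | zero =>
    intro g hg
    have h0 : qI f 0 = ⊥ := by simp [qI]
    rw [h0, Ideal.mem_bot] at hg ⊢
    exact C_mul_eq_zero_of s hs g hg
  | succ n ih =>
    intro g hg
    have ht : ∀ b, Ideal.Quotient.mk (qI f n) (C s) * b = 0 → b = 0 := by
      intro b hb
      obtain ⟨b, rfl⟩ := Ideal.Quotient.mk_surjective b
      rw [Ideal.Quotient.eq_zero_iff_mem]
      apply ih
      rw [← Ideal.Quotient.eq_zero_iff_mem, map_mul]
      exact hb
    rw [mem_qI_succ] at hg ⊢
    obtain ⟨h, hh⟩ := hg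
    have e1 : map (Ideal.Quotient.mk (qI f n)) (spl k n O (C s * g)) =
        C (Ideal.Quotient.mk (qI f n) (C s)) *
          map (Ideal.Quotient.mk (qI f n)) (spl k n O g) := by
      rw [map_mul, map_mul, spl_C, map_C]
    have e2 : map ((Ideal.Quotient.mk (qI f n)).comp C) f =
        C (Ideal.Quotient.mk (qI f n) (C s)) * map ((Ideal.Quotient.mk (qI f n)).comp C) f0 +
          map ((Ideal.Quotient.mk (qI f n)).comp C) f1 := by
      refine (congrArg (map ((Ideal.Quotient.mk (qI f n)).comp C)) hf).trans ?_
      rw [map_add, map_mul, map_C]; rfl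
    rw [e1, e2] at hh
    rw [e2]
    refine torsion_step m _ ht _ _ _ h d ?_ (fun e he => hsup e (support_map_subset _ _ he)) hh
    rw [coeff_map]
    exact hc.map _

end MinorsPrime

namespace MinorsPrime

variable {k : ℕ}

/-- The linear combination of the `F i` with coefficients `lam i`. -/
noncomputable def lin {ℓ : ℕ} {L : Type*} [CommRing L] (φ : ℂ →+* L)
    (F : Fin ℓ → MvPolynomial (Fin k) ℂ) (lam : Fin ℓ → L) : MvPolynomial (Fin k) L :=
  ∑ i, C (lam i) * map φ (F i)

/-- Vanishing on the generic common hypersurface. -/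
def InJ {ℓ : ℕ} (F : Fin ℓ → MvPolynomial (Fin k) ℂ) (n : ℕ)
    (g : MvPolynomial (Fin k × Fin n) ℂ) : Prop :=
  ∀ (L : Type) [Field L] (φ : ℂ →+* L) (lam : Fin ℓ → L),
    Function.Injective (eval₂Hom φ lam) → map φ g ∈ qI (lin φ F lam) n

/-- Strictly decreasing leading monomials. -/
def Ech (m : MonomialOrder (Fin k)) {ℓ : ℕ} (F : Fin ℓ → MvPolynomial (Fin k) ℂ) : Prop :=
  (∀ i, F i ≠ 0) ∧ ∀ i j, i < j → m.toSyn (m.degree (F j)) < m.toSyn (m.degree (F i))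

lemma Ech.tail {m : MonomialOrder (Fin k)} {ℓ : ℕ} {F : Fin (ℓ + 1) → MvPolynomial (Fin k) ℂ}
    (h : Ech m F) : Ech m (fun i => F i.succ) :=
  ⟨fun _ => h.1 _, fun _ _ hij => h.2 _ _ (Fin.succ_lt_succ_iff.mpr hij)⟩

lemma map_lin {ℓ : ℕ} {L M : Type*} [CommRing L] [CommRing M] (φ : ℂ →+* L) (ψ : L →+* M)
    (F : Fin ℓ → MvPolynomial (Fin k) ℂ) (lam : Fin ℓ → L) :
    map ψ (lin φ F lam) = lin (ψ.comp φ) F (fun i => ψ (lam i)) := by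
  simp [lin, map_sum, map_map]

lemma lin_succ {ℓ : ℕ} {L : Type*} [CommRing L] (φ : ℂ →+* L)
    (F : Fin (ℓ + 1) → MvPolynomial (Fin k) ℂ) (lam : Fin (ℓ + 1) → L) :
    lin φ F lam = C (lam 0) * map φ (F 0) + lin φ (fun i => F i.succ) (fun i => lam i.succ) := by
  rw [lin, Fin.sum_univ_succ]; rfl

lemma coeff_lin {m : MonomialOrder (Fin k)} {ℓ : ℕ} {L : Type*} [CommRing L] (φ : ℂ →+* L)
    {F : Fin (ℓ + 1) → MvPolynomial (Fin k) ℂ} (hF : Ech m F) (lam : Fin (ℓ + 1) → L) :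
    coeff (m.degree (F 0)) (lin φ F lam) = lam 0 * φ (m.leadingCoeff (F 0)) := by
  rw [lin_succ, coeff_add, coeff_C_mul, coeff_map, lin, coeff_sum, Finset.sum_eq_zero, add_zero]
  · rfl
  · intro i _
    rw [coeff_C_mul, coeff_map, m.coeff_eq_zero_of_lt (hF.2 0 i.succ (Fin.succ_pos i)), map_zero,
      mul_zero]

lemma support_lin {m : MonomialOrder (Fin k)} {ℓ : ℕ} {L : Type*} [CommRing L] (φ : ℂ →+* L)
    {F : Fin (ℓ + 1) → MvPolynomial (Fin k) ℂ} (hF : Ech m F) (lam : Fin (ℓ + 1) → L) :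
    ∀ e ∈ (lin φ F lam).support, m.toSyn e ≤ m.toSyn (m.degree (F 0)) := by
  intro e he
  by_contra! hlt
  apply mem_support_iff.mp he
  rw [lin, coeff_sum]
  apply Finset.sum_eq_zero
  intro i _
  have : m.toSyn (m.degree (F i)) ≤ m.toSyn (m.degree (F 0)) := by
    rcases eq_or_ne i 0 with rfl | hi
    · rfl
    · exact (hF.2 0 i (Fin.pos_of_ne_zero hi)).le
  rw [coeff_C_mul, coeff_map, m.coeff_eq_zero_of_lt (this.trans_lt hlt), map_zero, mul_zero]

lemma inj_cons {ℓ : ℕ} {K : Type*} [Field K] (φ : ℂ →+* K) (mu : Fin ℓ → K)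
    (h : Function.Injective (eval₂Hom φ mu)) :
    Function.Injective (eval₂Hom ((PowerSeries.C (R := K)).comp φ)
      (Fin.cons PowerSeries.X (fun i => PowerSeries.C (mu i)) : Fin (ℓ + 1) → PowerSeries K)) := by
  have : eval₂Hom ((PowerSeries.C (R := K)).comp φ)
      (Fin.cons PowerSeries.X (fun i => PowerSeries.C (mu i)) : Fin (ℓ + 1) → PowerSeries K) =
      ((Polynomial.coeToPowerSeries.ringHom).comp
        (Polynomial.mapRingHom (eval₂Hom φ mu))).comp
          (finSuccEquiv ℂ ℓ : _ →+* Polynomial (MvPolynomial (Fin ℓ) ℂ)) := by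
    apply MvPolynomial.ringHom_ext
    · intro r
      simp [finSuccEquiv_apply]
    · intro i
      refine Fin.cases ?_ (fun i => ?_) i
      · simp [finSuccEquiv_X_zero]
      · simp [finSuccEquiv_X_succ]
  rw [this, RingHom.coe_comp, RingHom.coe_comp]
  refine (Function.Injective.comp ?_ ?_).comp (finSuccEquiv ℂ ℓ).injective
  · exact Polynomial.coe_injective K
  · exact Polynomial.map_injective _ h

lemma coeff_spl_map {n : ℕ} {L : Type*} [CommRing L] (φ : ℂ →+* L)
    (Q : Ideal (MvPolynomial (Fin k × Fin n) L))
    (g : MvPolynomial (Fin k × Fin (n + 1)) ℂ) (w : Fin k →₀ ℕ) :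
    coeff w (map (Ideal.Quotient.mk Q) (spl k n L (map φ g))) =
      Ideal.Quotient.mk Q (map φ (coeff w (spl k n ℂ g))) := by
  rw [spl_map, coeff_map, coeff_map]

lemma supp_spl_map {n : ℕ} {L : Type*} [CommRing L] (φ : ℂ →+* L)
    (Q : Ideal (MvPolynomial (Fin k × Fin n) L)) (m : MonomialOrder (Fin k))
    (g : MvPolynomial (Fin k × Fin (n + 1)) ℂ) :
    ∀ e ∈ (map (Ideal.Quotient.mk Q) (spl k n L (map φ g))).support,
      m.toSyn e ≤ m.toSyn (m.degree (spl k n ℂ g)) := by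
  intro e he
  rw [spl_map] at he
  exact m.le_degree (support_map_subset _ _ (support_map_subset _ _ he))

lemma claimA {m : MonomialOrder (Fin k)} {ℓ n : ℕ}
    {F : Fin (ℓ + 1) → MvPolynomial (Fin k) ℂ} (hF : Ech m F)
    (g : MvPolynomial (Fin k × Fin (n + 1)) ℂ) (hg : InJ F (n + 1) g)
    (hw : ¬ m.degree (F 0) ≤ m.degree (spl k n ℂ g)) :
    InJ F n (m.leadingCoeff (spl k n ℂ g)) := by
  intro L _ φ lam hlam
  have h1 := hg L φ lam hlam
  rw [mem_qI_succ] at h1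
  obtain ⟨h, hh⟩ := h1
  set Q := qI (lin φ F lam) n with hQ
  have hlam0 : lam 0 ≠ 0 := by
    intro h0
    have : (X 0 : MvPolynomial (Fin (ℓ + 1)) ℂ) = 0 := hlam (by simp [h0])
    exact X_ne_zero _ this
  have hc : coeff (m.degree (F 0)) (map ((Ideal.Quotient.mk Q).comp C) (lin φ F lam)) ∈
      nonZeroDivisors _ := by
    rw [coeff_map, coeff_lin φ hF]
    apply IsUnit.mem_nonZeroDivisors
    apply IsUnit.map
    rw [isUnit_iff_ne_zero]
    exact mul_ne_zero hlam0 ((map_ne_zero φ).mpr (m.leadingCoeff_ne_zero_iff.mpr (hF.1 0)))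
  have hs : ∀ e ∈ (map ((Ideal.Quotient.mk Q).comp C) (lin φ F lam)).support,
      m.toSyn e ≤ m.toSyn (m.degree (F 0)) :=
    fun e he => support_lin φ hF lam e (support_map_subset _ _ he)
  have hsG := supp_spl_map φ Q m g
  have hcG := coeff_spl_map φ Q g (m.degree (spl k n ℂ g))
  rw [hh] at hsG hcG
  obtain ⟨b, -, hb⟩ := lead m hc hs hsG
  rw [← Ideal.Quotient.eq_zero_iff_mem]
  by_contra hne
  exact hw (hb (by rw [hcG]; exact hne))

lemma clear_den {O M : Type*} [CommRing O] [CommRing M] [Algebra O M] (S : Submonoid O)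
    [IsLocalization S M] {n : ℕ} {f : MvPolynomial (Fin k) O}
    {g : MvPolynomial (Fin k × Fin n) O}
    (h : map (algebraMap O M) g ∈ qI (map (algebraMap O M) f) n) :
    ∃ s ∈ S, C s * g ∈ qI f n := by
  let _ : Algebra (MvPolynomial (Fin k × Fin n) O) (MvPolynomial (Fin k × Fin n) M) :=
    MvPolynomial.algebraMvPolynomial
  rw [← map_qI] at h
  have h3 : algebraMap (MvPolynomial (Fin k × Fin n) O)
      (MvPolynomial (Fin k × Fin n) M) g ∈ (qI f n).map (algebraMap _ _) := h
  have : IsLocalization (S.map (C (σ := Fin k × Fin n))) (MvPolynomial (Fin k × Fin n) M) :=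
    MvPolynomial.isLocalization S M
  rw [IsLocalization.algebraMap_mem_map_algebraMap_iff
    (S.map (C (σ := Fin k × Fin n)))] at h3
  obtain ⟨_, ⟨s, hs, rfl⟩, hx⟩ := h3
  exact ⟨s, hs, hx⟩

lemma claimB {m : MonomialOrder (Fin k)} {ℓ n : ℕ}
    {F : Fin (ℓ + 1 + 1) → MvPolynomial (Fin k) ℂ} (hF : Ech m F)
    (g : MvPolynomial (Fin k × Fin (n + 1)) ℂ) (hg : InJ F (n + 1) g) :
    InJ (fun i => F i.succ) n (m.leadingCoeff (spl k n ℂ g)) := by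
  intro K _ φ mu hmu
  let φO : ℂ →+* PowerSeries K := (PowerSeries.C (R := K)).comp φ
  let lamO : Fin (ℓ + 1 + 1) → PowerSeries K :=
    Fin.cons PowerSeries.X (fun i => PowerSeries.C (mu i))
  have hinj : Function.Injective (eval₂Hom φO lamO) := inj_cons φ mu hmu
  let ι : PowerSeries K →+* LaurentSeries K := algebraMap _ _
  have hι : Function.Injective ι := HahnSeries.ofPowerSeries_injective
  have h1 := hg (LaurentSeries K) (ι.comp φO) (fun i => ι (lamO i)) (by
    have : eval₂Hom (ι.comp φO) (fun i => ι (lamO i)) = ι.comp (eval₂Hom φO lamO) := by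
      apply MvPolynomial.ringHom_ext <;> simp
    rw [this]
    exact hι.comp hinj)
  let f := lin φO F lamO
  rw [← map_lin, ← map_map] at h1
  have hunit : ∀ {c : ℂ}, c ≠ 0 → IsUnit (φO c) := fun hc => (isUnit_iff_ne_zero.mpr hc).map φO
  have hlc : ∀ i, m.leadingCoeff (F i) ≠ 0 := fun i => m.leadingCoeff_ne_zero_iff.mpr (hF.1 i)
  have hmu0 : mu 0 ≠ 0 := by
    intro h0
    have : (X 0 : MvPolynomial (Fin (ℓ + 1)) ℂ) = 0 := hmu (by simp [h0])
    exact X_ne_zero _ this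
  have hfd : f = C PowerSeries.X * map φO (F 0) +
      lin φO (fun i => F i.succ) (fun i => PowerSeries.C (mu i)) := lin_succ φO F lamO
  have htf : ∀ (n' : ℕ) (g' : MvPolynomial (Fin k × Fin n') (PowerSeries K)),
      C PowerSeries.X * g' ∈ qI f n' → g' ∈ qI f n' := by
    intro n'
    refine torsion_free m PowerSeries.X ?_ (map φO (F 0)) _ f hfd (m.degree (F 1)) ?_ ?_ n'
    · intro b hb
      exact (mul_eq_zero.mp hb).resolve_left PowerSeries.X_ne_zero
    · have := coeff_lin φO hF.tail (fun i => PowerSeries.C (mu i))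
      rw [show (F 1) = F (Fin.succ 0) from rfl, this]
      refine IsUnit.mul ?_ (hunit (hlc _))
      exact (isUnit_iff_ne_zero.mpr hmu0).map PowerSeries.C
    · exact support_lin φO hF.tail _
  -- clear denominators
  have h2 : map φO g ∈ qI f (n + 1) := by
    have h3 := clear_den (Submonoid.powers (PowerSeries.X : PowerSeries K)) (M := LaurentSeries K) h1
    obtain ⟨_, ⟨e, rfl⟩, hx⟩ := h3
    induction e with
    | zero => simpa using hx
    | succ e ih =>
      apply ih
      apply htf
      convert hx using 1
      simp only [pow_succ, map_mul]
      ring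
  rw [mem_qI_succ] at h2
  obtain ⟨h, hh⟩ := h2
  have hc0 : coeff (m.degree (F 0)) f = PowerSeries.X * φO (m.leadingCoeff (F 0)) :=
    coeff_lin φO hF lamO
  have hc : coeff (m.degree (F 0)) (map ((Ideal.Quotient.mk (qI f n)).comp C) f) ∈
      nonZeroDivisors _ := by
    rw [coeff_map, hc0, map_mul]
    refine mul_mem ?_ ((hunit (hlc 0)).map _).mem_nonZeroDivisors
    rw [mem_nonZeroDivisors_iff_right]
    intro b hb
    obtain ⟨b, rfl⟩ := Ideal.Quotient.mk_surjective b
    rw [Ideal.Quotient.eq_zero_iff_mem]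
    apply htf
    rw [← Ideal.Quotient.eq_zero_iff_mem, map_mul, mul_comm]
    exact hb
  have hs : ∀ e ∈ (map ((Ideal.Quotient.mk (qI f n)).comp C) f).support,
      m.toSyn e ≤ m.toSyn (m.degree (F 0)) :=
    fun e he => support_lin φO hF lamO e (support_map_subset _ _ he)
  have hsG := supp_spl_map φO (qI f n) m g
  have hcG := coeff_spl_map φO (qI f n) g (m.degree (spl k n ℂ g))
  rw [hh] at hsG hcG
  obtain ⟨b, hb, -⟩ := lead m hc hs hsG
  rw [hcG, coeff_map, hc0] at hb
  obtain ⟨b, rfl⟩ := Ideal.Quotient.mk_surjective b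
  rw [RingHom.comp_apply, ← map_mul, Ideal.Quotient.eq] at hb
  have h5 := mem_qI_map (PowerSeries.constantCoeff (R := K)) hb
  have h6 : (PowerSeries.constantCoeff (R := K)).comp φO = φ := by
    ext c; simp [φO]
  rw [map_sub, map_map, h6, map_mul, map_C, map_mul, PowerSeries.constantCoeff_X, zero_mul, C_0,
    zero_mul, sub_zero, map_lin, h6, lin_succ] at h5
  convert h5 using 2
  · simp [lamO]
  · rfl

end MinorsPrime

namespace MinorsPrime

variable {k : ℕ}

/-- The matrix of copies. -/
noncomputable def mx {P : Type*} [CommRing P] {ℓ : ℕ} (F : Fin ℓ → MvPolynomial (Fin k) P) (n : ℕ) :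
    Matrix (Fin ℓ) (Fin n) (MvPolynomial (Fin k × Fin n) P) :=
  Matrix.of fun i j => rename (fun a => (a, j)) (F i)

/-- The ideal of maximal minors. -/
noncomputable def minorsI {P : Type*} [CommRing P] {ℓ : ℕ} (F : Fin ℓ → MvPolynomial (Fin k) P)
    (n : ℕ) : Ideal (MvPolynomial (Fin k × Fin n) P) :=
  Ideal.span {d | ∃ g : Fin ℓ → Fin n, Function.Injective g ∧ d = ((mx F n).submatrix id g).det}

lemma det_mem_minorsI {P : Type*} [CommRing P] {ℓ : ℕ} (F : Fin ℓ → MvPolynomial (Fin k) P)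
    (n : ℕ) (g : Fin ℓ → Fin n) : ((mx F n).submatrix id g).det ∈ minorsI F n := by
  by_cases hg : Function.Injective g
  · exact Ideal.subset_span ⟨g, hg, rfl⟩
  · rw [Function.Injective] at hg
    push Not at hg
    obtain ⟨a, b, hab, hne⟩ := hg
    rw [Matrix.det_zero_of_column_eq hne]
    · exact zero_mem _
    · intro i; simp [hab]

lemma mul_det_mem {R : Type*} [CommRing R] {ℓ : ℕ} (Q : Ideal R) (N : Matrix (Fin ℓ) (Fin ℓ) R)
    (c : Fin ℓ → R) (h : ∀ j, ∑ i, c i * N i j ∈ Q) (i0 : Fin ℓ) : c i0 * N.det ∈ Q := by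
  have h1 : (Matrix.vecMul c N) = fun j => ∑ i, c i * N i j := rfl
  have h2 : Matrix.vecMul (Matrix.vecMul c N) N.adjugate = N.det • c := by
    rw [Matrix.vecMul_vecMul, Matrix.mul_adjugate, Matrix.vecMul_smul, Matrix.vecMul_one]
  have h3 := congrFun h2 i0
  rw [Pi.smul_apply, smul_eq_mul, mul_comm] at h3
  rw [← h3]
  change ∑ j : Fin ℓ, (Matrix.vecMul c N) j * N.adjugate j i0 ∈ Q
  exact Ideal.sum_mem _ fun j _ => Ideal.mul_mem_right _ _ (h j)

lemma minorsI_le_qI {ℓ n : ℕ} {L : Type*} [Field L] (φ : ℂ →+* L)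
    (F : Fin ℓ → MvPolynomial (Fin k) ℂ) (lam : Fin ℓ → L) (i0 : Fin ℓ) (h0 : lam i0 ≠ 0) :
    minorsI F n ≤ (qI (lin φ F lam) n).comap (map φ) := by
  rw [minorsI, Ideal.span_le]
  rintro _ ⟨g, -, rfl⟩
  rw [SetLike.mem_coe, Ideal.mem_comap, RingHom.map_det]
  have := mul_det_mem (qI (lin φ F lam) n)
    ((map (σ := Fin k × Fin n) φ).mapMatrix ((mx F n).submatrix id g)) (fun i => C (lam i)) (by
    intro j
    have : rename (fun a => (a, g j)) (lin φ F lam) ∈ qI (lin φ F lam) n :=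
      Ideal.subset_span ⟨g j, rfl⟩
    convert this using 1
    simp [lin, mx, map_rename]) i0
  have h2 := Ideal.mul_mem_left _ (C (lam i0)⁻¹) this
  rw [← mul_assoc, ← C_mul, inv_mul_cancel₀ h0, C_1, one_mul] at h2
  exact h2

lemma ne_zero_of_inj {ℓ : ℕ} {L : Type*} [CommRing L] (φ : ℂ →+* L) (lam : Fin ℓ → L)
    (h : Function.Injective (eval₂Hom φ lam)) (i : Fin ℓ) : lam i ≠ 0 := by
  intro h0
  have : (X i : MvPolynomial (Fin ℓ) ℂ) = 0 := h (by simp [h0])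
  exact X_ne_zero _ this

lemma inJ_of_mem {ℓ n : ℕ} (F : Fin (ℓ + 1) → MvPolynomial (Fin k) ℂ)
    {g : MvPolynomial (Fin k × Fin n) ℂ} (hg : g ∈ minorsI F n) : InJ F n g :=
  fun _ _ φ lam h => minorsI_le_qI φ F lam 0 (ne_zero_of_inj φ lam h 0) hg

lemma InJ.sub {ℓ n : ℕ} {F : Fin ℓ → MvPolynomial (Fin k) ℂ}
    {g g' : MvPolynomial (Fin k × Fin n) ℂ} (hg : InJ F n g) (hg' : InJ F n g') :
    InJ F n (g - g') := fun L _ φ lam h => by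
  rw [map_sub]; exact sub_mem (hg L φ lam h) (hg' L φ lam h)

lemma shift_mem {P : Type*} [CommRing P] {ℓ n : ℕ} (F : Fin ℓ → MvPolynomial (Fin k) P)
    {a : MvPolynomial (Fin k × Fin n) P} (ha : a ∈ minorsI F n) :
    rename (fun p : Fin k × Fin n => (p.1, p.2.succ)) a ∈ minorsI F (n + 1) := by
  have : minorsI F n ≤ (minorsI F (n + 1)).comap
      (rename (fun p : Fin k × Fin n => (p.1, p.2.succ))) := by
    rw [minorsI, Ideal.span_le]
    rintro _ ⟨g, -, rfl⟩
    rw [SetLike.mem_coe, Ideal.mem_comap]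
    convert det_mem_minorsI F (n + 1) (fun i => (g i).succ) using 1
    rw [AlgHom.map_det]
    congr 1
    ext1 i j
    simp [mx, rename_rename, Function.comp_def]
  exact this ha

lemma symm_monomial_mem {P : Type*} [CommRing P] {ℓ n : ℕ} (F : Fin ℓ → MvPolynomial (Fin k) P)
    {a : MvPolynomial (Fin k × Fin n) P} (ha : a ∈ minorsI F n) (w : Fin k →₀ ℕ) :
    (spl k n P).symm (monomial w a) ∈ minorsI F (n + 1) := by
  have : (monomial w a : MvPolynomial (Fin k) (MvPolynomial (Fin k × Fin n) P)) =
      C a * monomial w 1 := by rw [C_mul_monomial, mul_one]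
  rw [this, map_mul, ← spl_rename_succ', AlgEquiv.symm_apply_apply]
  exact Ideal.mul_mem_right _ _ (shift_mem F ha)

lemma cofactor_det {P : Type*} [CommRing P] {ℓ n : ℕ} (F : Fin (ℓ + 1) → MvPolynomial (Fin k) P)
    (g : Fin ℓ → Fin n) : ∃ c : Fin ℓ → MvPolynomial (Fin k × Fin n) P,
      spl k n P (((mx F (n + 1)).submatrix id (Fin.cons 0 (fun i => (g i).succ))).det) =
        C (((mx (fun i => F i.succ) n).submatrix id g).det) * map C (F 0) +
          ∑ i, C (c i) * map C (F i.succ) := by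
  refine ⟨fun i => (-1) ^ (i.succ : ℕ) * (Matrix.of fun (i' : Fin ℓ) (j : Fin ℓ) =>
    rename (fun a => (a, g j)) (F (i.succ.succAbove i'))).det, ?_⟩
  rw [Matrix.det_succ_column_zero, map_sum, Fin.sum_univ_succ]
  have key : ∀ i : Fin (ℓ + 1), spl k n P ((((mx F (n + 1)).submatrix id
      (Fin.cons 0 (fun i => (g i).succ))).submatrix i.succAbove Fin.succ).det) =
      C (Matrix.of fun (i' : Fin ℓ) (j : Fin ℓ) =>
        rename (fun a => (a, g j)) (F (i.succAbove i'))).det := by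
    intro i
    rw [AlgEquiv.map_det, RingHom.map_det]
    congr 1
    ext1 i' j
    simp [mx, spl_rename_succ]
  congr 1
  · rw [map_mul, map_mul, key]
    simp only [Fin.val_zero, pow_zero, map_one, one_mul, Matrix.submatrix_apply, Fin.cons_zero,
      id, mx, Matrix.of_apply, spl_rename_zero, Fin.succAbove_zero]
    rw [mul_comm]
    congr 2
  · refine Finset.sum_congr rfl fun i _ => ?_
    rw [map_mul, map_mul, key]
    simp only [Matrix.submatrix_apply, Fin.cons_zero,
      id, mx, Matrix.of_apply, spl_rename_zero, map_mul, map_pow, map_neg, map_one]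
    ring

lemma cofactor {P : Type*} [CommRing P] {ℓ n : ℕ} (F : Fin (ℓ + 1) → MvPolynomial (Fin k) P)
    {a : MvPolynomial (Fin k × Fin n) P} (ha : a ∈ minorsI (fun i => F i.succ) n) :
    ∃ D ∈ minorsI F (n + 1), ∃ c : Fin ℓ → MvPolynomial (Fin k × Fin n) P,
      spl k n P D = C a * map C (F 0) + ∑ i, C (c i) * map C (F i.succ) := by
  rw [minorsI] at ha
  induction ha using Submodule.span_induction with
  | mem d hd =>
    obtain ⟨g, -, rfl⟩ := hd
    refine ⟨_, det_mem_minorsI F (n + 1) (Fin.cons 0 (fun i => (g i).succ)), ?_⟩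
    exact cofactor_det F g
  | zero => exact ⟨0, zero_mem _, 0, by simp⟩
  | add x y _ _ hx hy =>
    obtain ⟨D, hD, c, h⟩ := hx
    obtain ⟨D', hD', c', h'⟩ := hy
    refine ⟨D + D', add_mem hD hD', c + c', ?_⟩
    rw [map_add, h, h']
    simp only [Pi.add_apply, C_add, add_mul, Finset.sum_add_distrib]
    ring
  | smul r x _ hx =>
    obtain ⟨D, hD, c, h⟩ := hx
    refine ⟨rename (fun p : Fin k × Fin n => (p.1, p.2.succ)) r * D, Ideal.mul_mem_left _ _ hD,
      fun i => r * c i, ?_⟩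
    rw [map_mul, h, spl_rename_succ', smul_eq_mul, mul_add, Finset.mul_sum]
    simp only [C_mul, mul_assoc]

lemma reduce_step {m : MonomialOrder (Fin k)} {R : Type*} [CommRing R]
    {G H : MvPolynomial (Fin k) R}
    (hs : ∀ e ∈ H.support, m.toSyn e ≤ m.toSyn (m.degree G))
    (hc : coeff (m.degree G) H = m.leadingCoeff G) :
    G - H = 0 ∨ m.toSyn (m.degree (G - H)) < m.toSyn (m.degree G) := by
  by_cases h0 : G - H = 0
  · exact Or.inl h0
  · right
    have h1 : m.toSyn (m.degree (G - H)) ≤ m.toSyn (m.degree G) := by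
      refine m.degree_sub_le.trans ?_
      rw [sup_le_iff]
      exact ⟨le_rfl, m.degree_le_iff.mpr hs⟩
    refine lt_of_le_of_ne h1 fun he => ?_
    have he' := m.toSyn.injective he
    have h2 := m.leadingCoeff_ne_zero_iff.mpr h0
    apply h2
    rw [MonomialOrder.leadingCoeff, he', coeff_sub, hc, MonomialOrder.leadingCoeff, sub_self]

lemma exists_reducer {m : MonomialOrder (Fin k)} {ℓ n : ℕ}
    {F : Fin (ℓ + 1) → MvPolynomial (Fin k) ℂ} (hF : Ech m F) (w : Fin k →₀ ℕ)
    (hw : m.degree (F 0) ≤ w) {a : MvPolynomial (Fin k × Fin n) ℂ}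
    (ha : a ∈ minorsI (fun i => F i.succ) n) :
    ∃ D ∈ minorsI F (n + 1), (∀ e ∈ (spl k n ℂ D).support, m.toSyn e ≤ m.toSyn w) ∧
      coeff w (spl k n ℂ D) = a := by
  obtain ⟨D, hD, c, hDc⟩ := cofactor F ha
  have hsup : ∀ e, m.toSyn (m.degree (F 0)) < m.toSyn e → coeff e (spl k n ℂ D) = 0 := by
    intro e he
    rw [hDc, coeff_add, coeff_C_mul, coeff_map, m.coeff_eq_zero_of_lt he, C_0, mul_zero, zero_add,
      coeff_sum]
    refine Finset.sum_eq_zero fun i _ => ?_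
    rw [coeff_C_mul, coeff_map,
      m.coeff_eq_zero_of_lt ((hF.2 0 i.succ (Fin.succ_pos i)).trans he), C_0, mul_zero]
  have hco : coeff (m.degree (F 0)) (spl k n ℂ D) = a * C (m.leadingCoeff (F 0)) := by
    rw [hDc, coeff_add, coeff_C_mul, coeff_map, coeff_sum, Finset.sum_eq_zero, add_zero]
    · rfl
    · intro i _
      rw [coeff_C_mul, coeff_map,
        m.coeff_eq_zero_of_lt ((hF.2 0 i.succ (Fin.succ_pos i))), C_0, mul_zero]
  have hlc := m.leadingCoeff_ne_zero_iff.mpr (hF.1 0)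
  have hwe : w - m.degree (F 0) + m.degree (F 0) = w := tsub_add_cancel_of_le hw
  refine ⟨(spl k n ℂ).symm (monomial (w - m.degree (F 0)) (C (m.leadingCoeff (F 0))⁻¹)) * D,
    Ideal.mul_mem_left _ _ hD, ?_, ?_⟩
  · rw [map_mul, AlgEquiv.apply_symm_apply]
    rw [← m.degree_le_iff]
    refine m.degree_mul_le.trans ?_
    rw [← hwe, map_add, map_add]
    refine add_le_add ?_ ?_
    · rw [hwe]; exact m.degree_monomial_le _
    · rw [m.degree_le_iff]
      intro e he
      by_contra! hlt
      exact mem_support_iff.mp he (hsup e hlt)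
  · rw [map_mul, AlgEquiv.apply_symm_apply]
    have h7 := coeff_monomial_mul (m.degree (F 0)) (w - m.degree (F 0))
      (C (m.leadingCoeff (F 0))⁻¹) (spl k n ℂ D)
    rw [hwe] at h7
    rw [h7, hco, mul_comm a, ← mul_assoc, ← C_mul, inv_mul_cancel₀ hlc, C_1,
      one_mul]

lemma minorsI_zero {P : Type*} [CommRing P] (F : Fin 0 → MvPolynomial (Fin k) P) (n : ℕ) :
    minorsI F n = ⊤ := by
  rw [Ideal.eq_top_iff_one]
  have := det_mem_minorsI F n Fin.elim0
  rwa [Matrix.det_isEmpty] at this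

lemma inj_frac (ℓ : ℕ) : Function.Injective (eval₂Hom
    ((algebraMap (MvPolynomial (Fin ℓ) ℂ) (FractionRing (MvPolynomial (Fin ℓ) ℂ))).comp C)
    (fun i => algebraMap (MvPolynomial (Fin ℓ) ℂ) (FractionRing (MvPolynomial (Fin ℓ) ℂ)) (X i))) := by
  have : eval₂Hom
    ((algebraMap (MvPolynomial (Fin ℓ) ℂ) (FractionRing (MvPolynomial (Fin ℓ) ℂ))).comp C)
    (fun i => algebraMap (MvPolynomial (Fin ℓ) ℂ) (FractionRing (MvPolynomial (Fin ℓ) ℂ)) (X i)) =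
    algebraMap (MvPolynomial (Fin ℓ) ℂ) (FractionRing (MvPolynomial (Fin ℓ) ℂ)) := by
    apply MvPolynomial.ringHom_ext <;> simp
  rw [this]
  exact IsFractionRing.injective _ _

/-- The key inclusion. -/
theorem mem_of_inJ (m : MonomialOrder (Fin k)) (n : ℕ) : ∀ (ℓ : ℕ)
    (F : Fin ℓ → MvPolynomial (Fin k) ℂ) (_ : Ech m F) (g : MvPolynomial (Fin k × Fin n) ℂ)
    (_ : InJ F n g), g ∈ minorsI F n := by
  induction n with
  | zero =>
    intro ℓ F hF g hg
    have h1 := hg _ _ _ (inj_frac ℓ)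
    have h0 : ∀ f : MvPolynomial (Fin k) (FractionRing (MvPolynomial (Fin ℓ) ℂ)), qI f 0 = ⊥ := by
      simp [qI]
    rw [h0, Ideal.mem_bot] at h1
    have h2 := map_injective _ (RingHom.injective _) (h1.trans (map_zero _).symm)
    rw [h2]
    exact zero_mem _
  | succ n ih =>
    intro ℓ F hF
    rcases ℓ with _ | ℓ
    · intro g _
      rw [minorsI_zero]; trivial
    have main : ∀ s : m.syn, ∀ g, m.toSyn (m.degree (spl k n ℂ g)) = s → InJ F (n + 1) g →
        g ∈ minorsI F (n + 1) := by
      intro s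
      induction s using WellFoundedLT.induction with
      | _ s ihs =>
      intro g hgs hg
      obtain ⟨D, hD, hDs, hDc⟩ : ∃ D ∈ minorsI F (n + 1),
          (∀ e ∈ (spl k n ℂ D).support, m.toSyn e ≤ m.toSyn (m.degree (spl k n ℂ g))) ∧
          coeff (m.degree (spl k n ℂ g)) (spl k n ℂ D) = m.leadingCoeff (spl k n ℂ g) := by
        by_cases hw : m.degree (F 0) ≤ m.degree (spl k n ℂ g)
        · apply exists_reducer hF _ hw
          rcases ℓ with _ | ℓ
          · rw [minorsI_zero]; trivial
          · exact ih _ _ hF.tail _ (claimB hF g hg)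
        · refine ⟨_, symm_monomial_mem F (ih _ _ hF _ (claimA hF g hg hw))
            (m.degree (spl k n ℂ g)), ?_, ?_⟩
          · rw [AlgEquiv.apply_symm_apply, ← m.degree_le_iff]
            exact m.degree_monomial_le _
          · rw [AlgEquiv.apply_symm_apply, coeff_monomial, if_pos rfl]
      have hsub : g - D ∈ minorsI F (n + 1) := by
        rcases reduce_step hDs hDc with h0 | hlt
        · rw [← map_sub, EmbeddingLike.map_eq_zero_iff] at h0
          rw [h0]; exact zero_mem _
        · rw [← map_sub, hgs] at hlt
          exact ihs _ hlt _ rfl (hg.sub (inJ_of_mem F hD))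
      have := add_mem hsub hD
      simpa using this
    intro g hg
    exact main _ g rfl hg

end MinorsPrime

namespace MinorsPrime

variable {k : ℕ}

lemma descent {K0 K : Type*} [Field K0] [Field K] [Algebra K0 K] {n : ℕ}
    (f : MvPolynomial (Fin k) K0) (g : MvPolynomial (Fin k × Fin n) K0)
    (h : map (algebraMap K0 K) g ∈ qI (map (algebraMap K0 K) f) n) : g ∈ qI f n := by
  obtain ⟨r, hr⟩ := LinearMap.exists_leftInverse_of_injective (Algebra.linearMap K0 K)
    (LinearMap.ker_eq_bot.mpr (algebraMap K0 K).injective)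
  have hr' : ∀ x, r (algebraMap K0 K x) = x := fun x => LinearMap.congr_fun hr x
  let ρ : MvPolynomial (Fin k × Fin n) K → MvPolynomial (Fin k × Fin n) K0 := fun h =>
    ∑ c ∈ h.support, monomial c (r (coeff c h))
  have hρ : ∀ h c, coeff c (ρ h) = r (coeff c h) := by
    intro h c
    simp only [ρ, coeff_sum, coeff_monomial, Finset.sum_ite_eq']
    split_ifs with hc
    · rfl
    · rw [notMem_support_iff.mp hc, map_zero]
  rw [qI, Ideal.mem_span_range_iff_exists_fun] at h
  obtain ⟨c, hc⟩ := h
  rw [qI, Ideal.mem_span_range_iff_exists_fun]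
  refine ⟨fun j => ρ (c j), ?_⟩
  ext e
  have h2 := congrArg r (congrArg (coeff e) hc)
  rw [coeff_map, hr', coeff_sum, map_sum] at h2
  rw [← h2, coeff_sum]
  refine Finset.sum_congr rfl fun j _ => ?_
  rw [coeff_mul, coeff_mul, map_sum]
  refine Finset.sum_congr rfl fun x _ => ?_
  rw [hρ, ← map_rename, coeff_map, mul_comm (coeff x.1 (c j)), ← Algebra.smul_def, map_smul,
    smul_eq_mul, mul_comm]

lemma exists_equiv {R K L : Type} [Field R] [Field K] [Field L] [IsAlgClosed K] [IsAlgClosed L]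
    [Algebra R K] [Algebra R L] (hR : Cardinal.mk R ≤ Cardinal.aleph0)
    (hK : Cardinal.aleph0 < Cardinal.mk K) (hKL : Cardinal.mk K = Cardinal.mk L) :
    ∃ θ : K ≃+* L, ∀ x : R, θ (algebraMap R K x) = algebraMap R L x := by
  obtain ⟨s, hs⟩ := exists_isTranscendenceBasis R K
  obtain ⟨t, ht⟩ := exists_isTranscendenceBasis R L
  have h1 := IsAlgClosed.cardinal_eq_cardinal_transcendence_basis_of_aleph0_lt' _ hs hR hK
  have h2 := IsAlgClosed.cardinal_eq_cardinal_transcendence_basis_of_aleph0_lt' _ ht hR (hKL ▸ hK)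
  rw [h1, h2] at hKL
  obtain ⟨e⟩ := Cardinal.eq.mp hKL
  let _ := IsAlgClosed.isAlgClosure_of_transcendence_basis _ hs
  let _ := IsAlgClosed.isAlgClosure_of_transcendence_basis _ ht
  let e1 : Algebra.adjoin R (Set.range ((↑) : s → K)) ≃ₐ[R]
      Algebra.adjoin R (Set.range ((↑) : t → L)) :=
    (hs.1.aevalEquiv.symm.trans (renameEquiv R e)).trans ht.1.aevalEquiv
  refine ⟨IsAlgClosure.equivOfEquiv K L e1.toRingEquiv, fun x => ?_⟩
  rw [IsScalarTower.algebraMap_apply R (Algebra.adjoin R (Set.range ((↑) : s → K))) K,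
    IsAlgClosure.equivOfEquiv_algebraMap]
  change algebraMap _ _ (e1 _) = _
  rw [AlgEquiv.commutes, ← IsScalarTower.algebraMap_apply]

lemma irr_generic {ℓ : ℕ} (F : Fin ℓ → MvPolynomial (Fin k) ℂ)
    (p : MvPolynomial (Fin ℓ) ℂ) (hp : p ≠ 0)
    (hgen : ∀ lam : Fin ℓ → ℂ, eval lam p ≠ 0 → Irreducible (∑ i, C (lam i) * F i))
    {K : Type} [Field K] [IsAlgClosed K] (φ : ℂ →+* K) (lam : Fin ℓ → K)
    (hinj : Function.Injective (eval₂Hom φ lam)) (hcard : Cardinal.mk K = Cardinal.continuum) :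
    Irreducible (lin φ F lam) := by
  let S : Set ℂ := (Set.range fun c => coeff c p) ∪ ⋃ i, Set.range fun c => coeff c (F i)
  have hS : S.Countable := by
    refine (Set.countable_range _).union (Set.countable_iUnion fun i => Set.countable_range _)
  let k0 := Subfield.closure S
  have hk0 : Cardinal.mk k0 ≤ Cardinal.aleph0 :=
    (Subfield.cardinalMk_closure_le_max S).trans (max_le (Cardinal.le_aleph0_iff_set_countable.mpr hS) le_rfl)
  let _ : Algebra k0 K := (φ.comp k0.subtype).toAlgebra
  obtain ⟨θ, hθ⟩ := exists_equiv (R := k0) (K := K) (L := ℂ) hk0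
    (by rw [hcard]; exact Cardinal.aleph0_lt_continuum) (by rw [hcard, Cardinal.mk_complex])
  have hθ' : ∀ x ∈ S, θ (φ x) = x := fun x hx => hθ ⟨x, Subfield.subset_closure hx⟩
  let ψ : ℂ →+* ℂ := (θ : K →+* ℂ).comp φ
  have hF : ∀ i, map ψ (F i) = F i := by
    intro i
    ext c
    rw [coeff_map]
    exact hθ' _ (Or.inr (Set.mem_iUnion.mpr ⟨i, c, rfl⟩))
  have hpm : map ψ p = p := by
    ext c
    rw [coeff_map]
    exact hθ' _ (Or.inl ⟨c, rfl⟩)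
  have h1 : eval (fun i => θ (lam i)) p ≠ 0 := by
    have h2 : θ (eval₂Hom φ lam p) ≠ 0 := by
      rw [Ne, EmbeddingLike.map_eq_zero_iff]
      intro h
      exact hp (hinj (h.trans (map_zero _).symm))
    have h3 : θ (eval₂Hom φ lam p) = eval (fun i => θ (lam i)) (map ψ p) := by
      rw [eval_map]
      exact hom_eval₂ p φ (θ : K →+* ℂ) lam
    rwa [h3, hpm] at h2
  have h4 := hgen _ h1
  have h5 : (mapEquiv (Fin k) θ) (lin φ F lam) = ∑ i, C (θ (lam i)) * F i := by
    have : (mapEquiv (Fin k) θ) (lin φ F lam) = map (θ : K →+* ℂ) (lin φ F lam) := rfl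
    rw [this, map_lin, lin]
    refine Finset.sum_congr rfl fun i _ => ?_
    have := hF i
    rw [this]; rfl
  rw [← h5] at h4
  exact (MulEquiv.irreducible_iff (mapEquiv (Fin k) θ)).mp h4

theorem prime_ech (m : MonomialOrder (Fin k)) {ℓ : ℕ} (n : ℕ)
    (F : Fin (ℓ + 1) → MvPolynomial (Fin k) ℂ) (hF : Ech m F)
    (p : MvPolynomial (Fin (ℓ + 1)) ℂ) (hp : p ≠ 0)
    (hgen : ∀ lam : Fin (ℓ + 1) → ℂ, eval lam p ≠ 0 → Irreducible (∑ i, C (lam i) * F i)) :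
    (minorsI F n).IsPrime := by
  let A := MvPolynomial (Fin (ℓ + 1)) ℂ
  let K0 := FractionRing A
  let K := AlgebraicClosure K0
  let φ0 : ℂ →+* K0 := (algebraMap A K0).comp C
  let lam0 : Fin (ℓ + 1) → K0 := fun i => algebraMap A K0 (X i)
  have hinj0 : Function.Injective (eval₂Hom φ0 lam0) := inj_frac (ℓ + 1)
  let ι : K0 →+* K := algebraMap K0 K
  have hinj : Function.Injective (eval₂Hom (ι.comp φ0) (fun i => ι (lam0 i))) := by
    have : eval₂Hom (ι.comp φ0) (fun i => ι (lam0 i)) = ι.comp (eval₂Hom φ0 lam0) := by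
      apply MvPolynomial.ringHom_ext <;> simp
    rw [this]
    exact ι.injective.comp hinj0
  have hcard : Cardinal.mk K = Cardinal.continuum := by
    apply le_antisymm
    · refine (Algebra.IsAlgebraic.cardinalMk_le_max K0 K).trans ?_
      refine max_le ?_ Cardinal.aleph0_le_continuum
      rw [Cardinal.mk_fractionRing]
      refine MvPolynomial.cardinalMk_le_max.trans ?_
      rw [Cardinal.mk_complex]
      refine max_le (max_le le_rfl ?_) Cardinal.aleph0_le_continuum
      exact (Cardinal.lt_aleph0_of_finite _).le.trans Cardinal.aleph0_le_continuum
    · rw [← Cardinal.mk_complex]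
      exact Cardinal.mk_le_of_injective (ι.comp φ0).injective
  have hirr := irr_generic F p hp hgen (ι.comp φ0) _ hinj hcard
  have hpr := qI_prime _ hirr n
  have hJ : minorsI F n = (qI (lin (ι.comp φ0) F (fun i => ι (lam0 i))) n).comap
      (map (ι.comp φ0)) := by
    apply le_antisymm
    · exact minorsI_le_qI _ F _ 0 (ne_zero_of_inj _ _ hinj 0)
    · intro g hg
      rw [Ideal.mem_comap, ← map_lin, ← map_map] at hg
      have hg0 := descent _ _ hg
      apply mem_of_inJ m n _ F hF
      intro L _ φ lam hlam
      let τ : K0 →+* L := IsFractionRing.lift (A := A) hlam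
      have hτ : ∀ a : A, τ (algebraMap A K0 a) = eval₂Hom φ lam a := fun a =>
        IsFractionRing.lift_algebraMap hlam a
      have h1 := mem_qI_map τ hg0
      have h2 : τ.comp φ0 = φ := by
        ext c
        change τ (algebraMap A K0 (C c)) = _
        rw [hτ]; simp
      have h3 : (fun i => τ (lam0 i)) = lam := by
        ext i
        change τ (algebraMap A K0 (X i)) = _
        rw [hτ]; simp
      rwa [map_map, map_lin, h2, h3] at h1
  rw [hJ]
  exact hpr.comap _

end MinorsPrime

namespace MinorsPrime

variable {k : ℕ}

lemma Ech.linInd {m : MonomialOrder (Fin k)} {ℓ : ℕ} {G : Fin ℓ → MvPolynomial (Fin k) ℂ}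
    (h : Ech m G) (c : Fin ℓ → ℂ) (hc : ∑ i, C (c i) * G i = 0) : c = 0 := by
  have key : ∀ i, c i = 0 := by
    intro i
    induction i using WellFoundedLT.induction with
    | _ i ih =>
    have h1 := congrArg (coeff (m.degree (G i))) hc
    rw [coeff_sum, coeff_zero, Finset.sum_eq_single i] at h1
    · rw [coeff_C_mul] at h1
      exact (mul_eq_zero.mp h1).resolve_right (m.leadingCoeff_ne_zero_iff.mpr (h.1 i))
    · intro j _ hj
      rcases lt_or_gt_of_ne hj with hlt | hgt
      · rw [ih j hlt, C_0, zero_mul, coeff_zero]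
      · rw [coeff_C_mul, m.coeff_eq_zero_of_lt (h.2 i j hgt), mul_zero]
    · intro h; exact absurd (Finset.mem_univ i) h
  exact funext key

lemma exists_ech (m : MonomialOrder (Fin k)) (ℓ : ℕ) :
    ∀ (V : Submodule ℂ (MvPolynomial (Fin k) ℂ)) [FiniteDimensional ℂ V],
      ℓ ≤ Module.finrank ℂ V → ∃ G : Fin ℓ → MvPolynomial (Fin k) ℂ, Ech m G ∧ ∀ i, G i ∈ V := by
  induction ℓ with
  | zero => intro V _ _; exact ⟨Fin.elim0, ⟨fun i => i.elim0, fun i => i.elim0⟩, fun i => i.elim0⟩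
  | succ ℓ ih =>
    intro V _ hV
    have hpos : 0 < Module.finrank ℂ V := by omega
    have : Nontrivial V := Module.finrank_pos_iff.mp hpos
    obtain ⟨⟨v, hv⟩, hv0⟩ := exists_ne (0 : V)
    have hv0' : v ≠ 0 := fun h => hv0 (Subtype.ext h)
    obtain ⟨_, ⟨v0, ⟨hv0V, hv0n⟩, rfl⟩, hmin⟩ := WellFounded.has_min
      (wellFounded_lt (α := m.syn))
      ((fun v => m.toSyn (m.degree v)) '' {v | v ∈ V ∧ v ≠ 0}) ⟨_, v, ⟨hv, hv0'⟩, rfl⟩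
    let f : V →ₗ[ℂ] ℂ := (lcoeff ℂ (m.degree v0)).comp V.subtype
    let W : Submodule ℂ (MvPolynomial (Fin k) ℂ) := (LinearMap.ker f).map V.subtype
    have hWr : Module.finrank ℂ W = Module.finrank ℂ (LinearMap.ker f) :=
      Submodule.finrank_map_subtype_eq V (LinearMap.ker f)
    have h1 := LinearMap.finrank_range_add_finrank_ker f
    have h2 : Module.finrank ℂ (LinearMap.range f) ≤ 1 := by
      simpa using Submodule.finrank_le (LinearMap.range f)
    obtain ⟨G, hG, hGW⟩ := ih W (by omega)
    have hW : ∀ w ∈ W, w ∈ V ∧ coeff (m.degree v0) w = 0 := by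
      rintro _ ⟨⟨w, hw⟩, hw2, rfl⟩
      exact ⟨hw, hw2⟩
    refine ⟨Fin.snoc G v0, ⟨?_, ?_⟩, ?_⟩
    · intro i
      refine Fin.lastCases ?_ (fun i => ?_) i
      · simpa using hv0n
      · simpa using hG.1 i
    · intro i j
      refine Fin.lastCases ?_ (fun j => ?_) j
      · refine Fin.lastCases ?_ (fun i => ?_) i
        · intro h; exact absurd h (lt_irrefl _)
        · intro _
          simp only [Fin.snoc_last, Fin.snoc_castSucc]
          have h3 := hW _ (hGW i)
          have h4 : ¬ m.toSyn (m.degree (G i)) < m.toSyn (m.degree v0) :=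
            hmin _ ⟨_, ⟨h3.1, hG.1 i⟩, rfl⟩
          refine lt_of_le_of_ne (not_lt.mp h4) fun he => ?_
          have he' := m.toSyn.injective he
          apply m.leadingCoeff_ne_zero_iff.mpr (hG.1 i)
          rw [MonomialOrder.leadingCoeff, ← he', h3.2]
      · refine Fin.lastCases ?_ (fun i => ?_) i
        · intro h; exact absurd h (not_lt.mpr (Fin.le_last _))
        · intro h
          simp only [Fin.snoc_castSucc]
          exact hG.2 i j (Fin.castSucc_lt_castSucc_iff.mp h)
    · intro i
      refine Fin.lastCases ?_ (fun i => ?_) i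
      · simpa using hv0V
      · simpa using (hW _ (hGW i)).1

lemma exists_change (m : MonomialOrder (Fin k)) {ℓ : ℕ} (F : Fin ℓ → MvPolynomial (Fin k) ℂ)
    (hF : LinearIndependent ℂ F) : ∃ U : Matrix (Fin ℓ) (Fin ℓ) ℂ, U.det ≠ 0 ∧
      Ech m (fun i => ∑ j, C (U i j) * F j) := by
  have hfd : FiniteDimensional ℂ (Submodule.span ℂ (Set.range F)) :=
    FiniteDimensional.span_of_finite ℂ (Set.finite_range F)
  obtain ⟨G, hG, hGV⟩ := exists_ech m ℓ (Submodule.span ℂ (Set.range F))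
    (by rw [finrank_span_eq_card hF, Fintype.card_fin])
  simp only [Submodule.mem_span_range_iff_exists_fun] at hGV
  choose U hU using hGV
  have hGU : G = fun i => ∑ j, C (U i j) * F j := by
    ext1 i
    rw [← hU]
    simp only [MvPolynomial.smul_eq_C_mul]
  refine ⟨U, ?_, hGU ▸ hG⟩
  intro hdet
  obtain ⟨c, hc0, hc⟩ := Matrix.exists_vecMul_eq_zero_iff.mpr hdet
  apply hc0
  apply hG.linInd
  rw [hGU]
  simp only [Finset.mul_sum, ← mul_assoc, ← C_mul]
  rw [Finset.sum_comm]
  apply Finset.sum_eq_zero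
  intro j _
  rw [← Finset.sum_mul, ← map_sum]
  have : ∑ i, c i * U i j = 0 := congrFun hc j
  rw [this, C_0, zero_mul]

lemma det_change {ℓ : ℕ} (F : Fin ℓ → MvPolynomial (Fin k) ℂ) (U : Matrix (Fin ℓ) (Fin ℓ) ℂ)
    (n : ℕ) (g : Fin ℓ → Fin n) :
    ((mx (fun i => ∑ j, C (U i j) * F j) n).submatrix id g).det =
      C U.det * ((mx F n).submatrix id g).det := by
  rw [RingHom.map_det, ← Matrix.det_mul]
  congr 1
  ext1 i j
  simp [mx, Matrix.mul_apply]

lemma minorsI_change {ℓ : ℕ} (F : Fin ℓ → MvPolynomial (Fin k) ℂ) (U : Matrix (Fin ℓ) (Fin ℓ) ℂ)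
    (hU : U.det ≠ 0) (n : ℕ) : minorsI (fun i => ∑ j, C (U i j) * F j) n = minorsI F n := by
  apply le_antisymm
  · rw [minorsI, Ideal.span_le]
    rintro _ ⟨g, -, rfl⟩
    rw [det_change]
    exact Ideal.mul_mem_left _ _ (det_mem_minorsI F n g)
  · conv_lhs => rw [minorsI]
    rw [Ideal.span_le]
    rintro _ ⟨g, -, rfl⟩
    have := Ideal.mul_mem_left _ (C U.det⁻¹)
      (det_mem_minorsI (fun i => ∑ j, C (U i j) * F j) n g)
    rwa [det_change, ← mul_assoc, ← C_mul, inv_mul_cancel₀ hU, C_1, one_mul] at this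

theorem prime_minors {ℓ : ℕ} (n : ℕ)
    (F : Fin (ℓ + 1) → MvPolynomial (Fin k) ℂ) (hF : LinearIndependent ℂ F)
    (p : MvPolynomial (Fin (ℓ + 1)) ℂ) (hp : p ≠ 0)
    (hgen : ∀ lam : Fin (ℓ + 1) → ℂ, eval lam p ≠ 0 → Irreducible (∑ i, C (lam i) * F i)) :
    (minorsI F n).IsPrime := by
  obtain ⟨U, hU, hE⟩ := exists_change MonomialOrder.degLex F hF
  rw [← minorsI_change F U hU n]
  have hev : ∀ lam : Fin (ℓ + 1) → ℂ, eval lam (bind₁ (fun j => ∑ i, C (U i j) * X i) p) =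
      eval (Matrix.vecMul lam U) p := by
    intro lam
    have h1 : (Matrix.vecMul lam U) = fun j => ∑ i, lam i * U i j := rfl
    rw [← MvPolynomial.coe_aeval_eq_eval, ← MvPolynomial.coe_aeval_eq_eval]
    simp only [RingHom.coe_coe]
    rw [aeval_bind₁]
    congr 2
    rw [h1]
    ext1 j
    simp [mul_comm]
  refine prime_ech MonomialOrder.degLex n _ hE (bind₁ (fun j => ∑ i, C (U i j) * X i) p) ?_ ?_
  · intro h0
    apply hp
    apply MvPolynomial.funext
    intro mu
    have h2 := hev (Matrix.vecMul mu U⁻¹)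
    rw [h0, Matrix.vecMul_vecMul, Matrix.nonsing_inv_mul _ (isUnit_iff_ne_zero.mpr hU),
      Matrix.vecMul_one] at h2
    rw [← h2]; simp
  · intro lam hlam
    rw [hev] at hlam
    have h1 := hgen _ hlam
    convert h1 using 1
    simp only [Finset.mul_sum, ← mul_assoc, ← C_mul]
    rw [Finset.sum_comm]
    refine Finset.sum_congr rfl fun j _ => ?_
    rw [← Finset.sum_mul, ← map_sum]
    rfl

end MinorsPrime

namespace MinorsPrime

variable {k : ℕ}

lemma coeff_cofactor {m : MonomialOrder (Fin k)} {ℓ n : ℕ}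
    {F : Fin (ℓ + 1) → MvPolynomial (Fin k) ℂ} (hF : Ech m F) (g : Fin ℓ → Fin n) :
    coeff (m.degree (F 0))
      (spl k n ℂ (((mx F (n + 1)).submatrix id (Fin.cons 0 (fun i => (g i).succ))).det)) =
      ((mx (fun i => F i.succ) n).submatrix id g).det * C (m.leadingCoeff (F 0)) := by
  obtain ⟨c, hDc⟩ := cofactor_det F g
  rw [hDc, coeff_add, coeff_C_mul, coeff_map, coeff_sum, Finset.sum_eq_zero, add_zero]
  · rfl
  · intro i _
    rw [coeff_C_mul, coeff_map,
      m.coeff_eq_zero_of_lt ((hF.2 0 i.succ (Fin.succ_pos i))), C_0, mul_zero]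

lemma det_ne_zero {m : MonomialOrder (Fin k)} {ℓ : ℕ} :
    ∀ {F : Fin ℓ → MvPolynomial (Fin k) ℂ} (_ : Ech m F), (mx F ℓ).det ≠ 0 := by
  induction ℓ with
  | zero => intro F _; rw [Matrix.det_isEmpty]; exact one_ne_zero
  | succ ℓ ih =>
    intro F hF h0
    have h1 := coeff_cofactor hF (n := ℓ) id
    have h2 : (mx F (ℓ + 1)).submatrix id (Fin.cons 0 (fun i : Fin ℓ => (id i).succ)) =
        mx F (ℓ + 1) := by
      ext1 i j
      refine Fin.cases ?_ (fun j => ?_) j <;> simp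
    rw [h2, h0, map_zero, coeff_zero, Matrix.submatrix_id_id] at h1
    have h3 := mul_eq_zero.mp h1.symm
    rcases h3 with h3 | h3
    · exact ih hF.tail h3
    · exact m.leadingCoeff_ne_zero_iff.mpr (hF.1 0) (C_eq_zero.mp h3)

lemma delta_notMem {m : MonomialOrder (Fin k)} {ℓ n : ℕ}
    {F : Fin (ℓ + 1) → MvPolynomial (Fin k) ℂ} (hF : Ech m F) (hn : ℓ ≤ n)
    (hpr : (minorsI F n).IsPrime) :
    ((mx (fun i => F i.succ) n).submatrix id (Fin.castLE hn)).det ∉ minorsI F n := by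
  rcases ℓ with _ | ℓ
  · rw [Matrix.det_isEmpty]
    exact fun h => hpr.ne_top ((Ideal.eq_top_iff_one _).mpr h)
  · let r : Fin n → Fin (ℓ + 1) := fun j => if h : (j : ℕ) < ℓ + 1 then ⟨j, h⟩ else 0
    have hr : ∀ j, r (Fin.castLE hn j) = j := by
      intro j
      have h : ((Fin.castLE hn j : Fin n) : ℕ) < ℓ + 1 := j.2
      simp only [r, dif_pos h]
      rfl
    let s : MvPolynomial (Fin k × Fin n) ℂ →ₐ[ℂ] MvPolynomial (Fin k × Fin (ℓ + 1)) ℂ :=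
      rename (fun p => (p.1, r p.2))
    have hs : minorsI F n ≤ RingHom.ker s := by
      rw [minorsI, Ideal.span_le]
      rintro _ ⟨g, -, rfl⟩
      rw [SetLike.mem_coe, RingHom.mem_ker, AlgHom.map_det]
      have hni : ¬ Function.Injective (r ∘ g) := by
        intro h
        have := Fintype.card_le_of_injective _ h
        simp at this
      rw [Function.Injective] at hni
      push Not at hni
      obtain ⟨a, b, hab, hne⟩ := hni
      apply Matrix.det_zero_of_column_eq hne
      intro i
      simp only [Function.comp] at hab
      simp [mx, s, rename_rename, Function.comp_def, hab]
    intro h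
    have h1 : s _ = 0 := hs h
    rw [AlgHom.map_det] at h1
    apply det_ne_zero hF.tail
    rw [← h1]
    congr 1
    ext1 i j
    simp [mx, s, rename_rename, Function.comp_def, hr]

theorem height_upper {m : MonomialOrder (Fin k)} {ℓ n : ℕ}
    {F : Fin (ℓ + 1) → MvPolynomial (Fin k) ℂ} (hF : Ech m F) (hn : ℓ ≤ n)
    (hpr : (minorsI F n).IsPrime) : (minorsI F n).height ≤ (n - ℓ : ℕ) := by
  classical
  let g0 : Fin ℓ → Fin n := Fin.castLE hn
  let d : Fin n → MvPolynomial (Fin k × Fin n) ℂ := fun j =>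
    ((mx F n).submatrix id (Fin.cons j g0)).det
  let s : Finset (MvPolynomial (Fin k × Fin n) ℂ) :=
    (Finset.univ : Finset (Fin (n - ℓ))).image (fun t : Fin (n - ℓ) => d ⟨ℓ + (t : ℕ), by omega⟩)
  have hcard : s.card ≤ n - ℓ := Finset.card_image_le.trans (by simp)
  have hmin : minorsI F n ∈ (Ideal.span (s : Set (MvPolynomial (Fin k × Fin n) ℂ))).minimalPrimes := by
    refine ⟨⟨hpr, ?_⟩, ?_⟩
    · rw [Ideal.span_le]
      intro x hx
      obtain ⟨t, -, rfl⟩ := Finset.mem_image.mp hx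
      exact det_mem_minorsI F n _
    · rintro q ⟨hq, hsq⟩ hqI
      have hd : ∀ j, d j ∈ q := by
        intro j
        by_cases hj : (j : ℕ) < ℓ
        · have : d j = 0 := by
            refine Matrix.det_zero_of_column_eq (i := 0) (j := Fin.succ ⟨j, hj⟩)
              (Fin.succ_ne_zero _).symm ?_
            intro i
            simp only [Matrix.submatrix_apply, Fin.cons_zero, Fin.cons_succ]
            rfl
          rw [this]; exact zero_mem _
        · refine hsq (Ideal.subset_span ?_)
          refine Finset.mem_image.mpr ⟨⟨j - ℓ, by omega⟩, Finset.mem_univ _, ?_⟩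
          congr 1
          apply Fin.ext
          simp only
          omega
      have hδ : ((mx (fun i => F i.succ) n).submatrix id g0).det ∉ q := fun h =>
        delta_notMem hF hn hpr (hqI h)
      rw [minorsI, Ideal.span_le]
      rintro _ ⟨g, -, rfl⟩
      let c : Fin (ℓ + 1) → MvPolynomial (Fin k × Fin n) ℂ := fun i =>
        (-1) ^ (i : ℕ) * ((mx F n).submatrix i.succAbove g0).det
      have hc : ∀ j, ∑ i, c i * mx F n i j = d j := by
        intro j
        simp only [d]
        rw [Matrix.det_succ_column_zero]
        refine Finset.sum_congr rfl fun i _ => ?_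
        rw [Matrix.submatrix_submatrix]
        have : (Fin.cons j g0 : Fin (ℓ + 1) → Fin n) ∘ Fin.succ = g0 := by
          ext1 x; simp
        rw [this, Matrix.submatrix_apply, Fin.cons_zero]
        simp only [c, id, Function.id_comp]
        ring
      have h1 := mul_det_mem q ((mx F n).submatrix id g) c (by
        intro j
        have := hd (g j)
        rw [← hc] at this
        exact this) 0
      refine (hq.mem_or_mem h1).resolve_left ?_
      intro h2
      apply hδ
      have h3 : c 0 = ((mx (fun i => F i.succ) n).submatrix id g0).det := by
        simp only [c, Fin.val_zero, pow_zero, one_mul]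
        congr 1
      rwa [h3] at h2
  exact (Ideal.height_le_card_of_mem_minimalPrimes_span_finset hmin).trans (by exact_mod_cast hcard)

/-- Extension of primes to one more block of variables. -/
noncomputable def extP (k n : ℕ) (p : PrimeSpectrum (MvPolynomial (Fin k × Fin n) ℂ)) :
    PrimeSpectrum (MvPolynomial (Fin k × Fin (n + 1)) ℂ) :=
  ⟨RingHom.ker ((map (σ := Fin k) (Ideal.Quotient.mk p.asIdeal)).comp
    ((spl k n ℂ).toAlgHom : _ →+* _)), RingHom.ker_isPrime _⟩

lemma mem_extP {n : ℕ} (p : PrimeSpectrum (MvPolynomial (Fin k × Fin n) ℂ))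
    (g : MvPolynomial (Fin k × Fin (n + 1)) ℂ) :
    g ∈ (extP k n p).asIdeal ↔ ∀ e, coeff e (spl k n ℂ g) ∈ p.asIdeal := by
  change map (Ideal.Quotient.mk p.asIdeal) (spl k n ℂ g) = 0 ↔ _
  rw [MvPolynomial.ext_iff]
  simp only [coeff_map, coeff_zero, Ideal.Quotient.eq_zero_iff_mem]

lemma extP_strictMono (n : ℕ) : StrictMono (extP k n) := by
  have hle : ∀ p q, p ≤ q ↔ extP k n p ≤ extP k n q := by
    intro p q
    rw [← PrimeSpectrum.asIdeal_le_asIdeal, ← PrimeSpectrum.asIdeal_le_asIdeal]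
    constructor
    · intro h g hg
      rw [mem_extP] at hg ⊢
      exact fun e => h (hg e)
    · intro h a ha
      have h1 : rename (fun p : Fin k × Fin n => (p.1, p.2.succ)) a ∈ (extP k n p).asIdeal := by
        rw [mem_extP]
        intro e
        rw [spl_rename_succ', coeff_C]
        split_ifs
        · exact ha
        · exact zero_mem _
      have h2 := h h1
      rw [mem_extP] at h2
      have h3 := h2 0
      rwa [spl_rename_succ', coeff_zero_C] at h3
  intro p q hpq
  rw [lt_iff_le_not_ge] at hpq ⊢
  rwa [← hle, ← hle]

theorem height_lower {m : MonomialOrder (Fin k)} {ℓ : ℕ}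
    {F : Fin (ℓ + 1) → MvPolynomial (Fin k) ℂ} (hF : Ech m F)
    (hpr : ∀ n, (minorsI F n).IsPrime) (t : ℕ) :
    (t : ℕ∞) ≤ Order.height (⟨minorsI F (ℓ + t), hpr _⟩ :
      PrimeSpectrum (MvPolynomial (Fin k × Fin (ℓ + t)) ℂ)) := by
  induction t with
  | zero => simp
  | succ t ih =>
    have h1 := Order.height_le_height_apply_of_strictMono _ (extP_strictMono (k := k) (ℓ + t))
      ⟨minorsI F (ℓ + t), hpr _⟩
    have h2 : extP k (ℓ + t) ⟨minorsI F (ℓ + t), hpr _⟩ <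
        ⟨minorsI F (ℓ + t + 1), hpr _⟩ := by
      rw [lt_iff_le_not_ge, ← PrimeSpectrum.asIdeal_le_asIdeal, ← PrimeSpectrum.asIdeal_le_asIdeal]
      constructor
      · intro g hg
        rw [mem_extP] at hg
        have h3 : g = (spl k (ℓ + t) ℂ).symm (spl k (ℓ + t) ℂ g) := by simp
        rw [h3, as_sum (spl k (ℓ + t) ℂ g), map_sum]
        exact Ideal.sum_mem _ fun e _ => symm_monomial_mem F (hg e) e
      · intro h
        have h4 := h (det_mem_minorsI F (ℓ + t + 1)
          (Fin.cons 0 (fun i : Fin ℓ => (Fin.castLE (Nat.le_add_right ℓ t) i).succ)))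
        rw [mem_extP] at h4
        have h5 := h4 (m.degree (F 0))
        rw [coeff_cofactor hF] at h5
        have h6 := Ideal.mul_mem_right (C (m.leadingCoeff (F 0))⁻¹) _ h5
        rw [mul_assoc, ← C_mul, mul_inv_cancel₀ (m.leadingCoeff_ne_zero_iff.mpr (hF.1 0)), C_1,
          mul_one] at h6
        exact delta_notMem hF (Nat.le_add_right ℓ t) (hpr _) h6
    have h7 := Order.height_add_one_le h2
    push_cast
    exact (add_le_add (ih.trans h1) le_rfl).trans h7

theorem main_thm {ℓ n : ℕ} (hn : ℓ + 1 ≤ n)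
    (F : Fin (ℓ + 1) → MvPolynomial (Fin k) ℂ) (hF : LinearIndependent ℂ F)
    (p : MvPolynomial (Fin (ℓ + 1)) ℂ) (hp : p ≠ 0)
    (hgen : ∀ lam : Fin (ℓ + 1) → ℂ, eval lam p ≠ 0 → Irreducible (∑ i, C (lam i) * F i)) :
    ∃ hp : (minorsI F n).IsPrime,
      Order.height (⟨minorsI F n, hp⟩ : PrimeSpectrum (MvPolynomial (Fin k × Fin n) ℂ))
        = (n - (ℓ + 1) + 1 : ℕ) := by
  obtain ⟨U, hU, hE⟩ := exists_change MonomialOrder.degLex F hF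
  have hpr : ∀ n, (minorsI (fun i => ∑ j, C (U i j) * F j) n).IsPrime := fun n => by
    rw [minorsI_change F U hU n]; exact prime_minors n F hF p hp hgen
  refine ⟨prime_minors n F hF p hp hgen, ?_⟩
  have hup := height_upper hE (by omega : ℓ ≤ n) (hpr n)
  obtain ⟨t, rfl⟩ : ∃ t, n = ℓ + t := ⟨n - ℓ, by omega⟩
  have hlo := height_lower hE hpr t
  have hh := PrimeSpectrum.height_eq_orderHeight (⟨_, hpr (ℓ + t)⟩ :
      PrimeSpectrum (MvPolynomial (Fin k × Fin (ℓ + t)) ℂ))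
  rw [← hh] at hlo
  rw [← PrimeSpectrum.height_eq_orderHeight]
  simp only at hlo ⊢
  rw [minorsI_change F U hU] at hlo hup
  have e1 : ℓ + t - (ℓ + 1) + 1 = t := by omega
  have e2 : ℓ + t - ℓ = t := by omega
  rw [e2] at hup
  rw [e1]
  exact le_antisymm hup hlo

end MinorsPrime

/-- Let `F₁,…,F_ℓ ∈ ℂ[x₁,…,x_k]` be linearly independent and
such that a general linear combination `λ₁F₁ + … + λ_ℓF_ℓ` is irreducible
(genericity expressed by a nonzero polynomial condition on `λ`). For `n ≥ ℓ`,
form the `ℓ×n` matrix whose `(i,j)` entry is `Fᵢ` evaluated in the `j`-th block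
of variables. Then the ideal of its maximal `ℓ×ℓ` minors in `ℂ[x_{ij}]` is
prime of codimension (= height) `n - ℓ + 1`. -/
theorem minors_ideal_prime_of_general_irreducible (k ℓ n : ℕ)
    (hn : ℓ ≤ n) (hℓ : 1 ≤ ℓ)
    (F : Fin ℓ → MvPolynomial (Fin k) ℂ)
    (hFli : LinearIndependent ℂ F)
    (hFgen : ∃ p : MvPolynomial (Fin ℓ) ℂ, p ≠ 0 ∧
      ∀ lam : Fin ℓ → ℂ, eval lam p ≠ 0 →
        Irreducible (∑ i, MvPolynomial.C (lam i) * F i))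
    (A : Matrix (Fin ℓ) (Fin n) (MvPolynomial (Fin k × Fin n) ℂ))
    (hA : ∀ i j, A i j = rename (fun a => (a, j)) (F i))
    (I : Ideal (MvPolynomial (Fin k × Fin n) ℂ))
    (hI : I = Ideal.span {d | ∃ g : Fin ℓ → Fin n,
      Function.Injective g ∧ d = (A.submatrix id g).det}) :
    ∃ hp : I.IsPrime,
      Order.height (⟨I, hp⟩ : PrimeSpectrum (MvPolynomial (Fin k × Fin n) ℂ))
        = (n - ℓ + 1 : ℕ) := by
  obtain ⟨ℓ, rfl⟩ : ∃ l, ℓ = l + 1 := ⟨ℓ - 1, by omega⟩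
  obtain ⟨p, hp, hgen⟩ := hFgen
  have hAm : A = MinorsPrime.mx F n := by
    ext1 i j
    exact hA i j
  have hIm : I = MinorsPrime.minorsI F n := by
    rw [hI, hAm]; rfl
  subst hIm
  exact MinorsPrime.main_thm hn F hFli p hp hgen
end

section
/- For n ≥ 3, the ABCT variety V(3,n) ⊆ G(3,n), defined as the Zariski closure of the image of the quadratic Veronese map θ_2: G(2,n) ⇢ G(3,n), coincides (as a variety) with the degeneracy locus Z_2(3,n) of 3-dimensional subspaces of ℂ^n whose representing 3×n matrices have columnwise quadratic Veronese image of rank at most 5. -/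
/-- The row span of a matrix, as a subspace of `ℂⁿ`. -/
noncomputable def rowSpan {n : ℕ} {ι : Type*} (A : Matrix ι (Fin n) ℂ) : Submodule ℂ (Fin n → ℂ) :=
  Submodule.span ℂ (Set.range fun i => A i)

/-- The columnwise quadratic Veronese image of a `2×n` matrix with columns
`(xⱼ, yⱼ)`: the `3×n` matrix with columns `(xⱼ², xⱼyⱼ, yⱼ²)`. -/
noncomputable def ver2 {n : ℕ} (M : Matrix (Fin 2) (Fin n) ℂ) : Matrix (Fin 3) (Fin n) ℂ :=
  Matrix.of fun i j => ![M 0 j * M 0 j, M 0 j * M 1 j, M 1 j * M 1 j] i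

/-- The `6×n` matrix of all quadratic monomials of the columns of a `3×n`
matrix. -/
noncomputable def quadOf {n : ℕ} (A : Matrix (Fin 3) (Fin n) ℂ) : Matrix (Sym (Fin 3) 2) (Fin n) ℂ :=
  Matrix.of fun s j => ((s : Multiset (Fin 3)).map fun i => A i j).prod

open Matrix

lemma rank_eq_card_iff {n : ℕ} {ι : Type*} [Fintype ι] (A : Matrix ι (Fin n) ℂ) :
    A.rank = Fintype.card ι ↔ LinearIndependent ℂ (fun i => A i) := by
  rw [linearIndependent_iff_card_eq_finrank_span, Matrix.rank_eq_finrank_span_row]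
  exact eq_comm

lemma rank3_iff {n : ℕ} (A : Matrix (Fin 3) (Fin n) ℂ) :
    A.rank = 3 ↔ LinearIndependent ℂ (fun i => A i) := by
  rw [← rank_eq_card_iff]; simp

lemma isOpen_rank3 (n : ℕ) : IsOpen {A : Matrix (Fin 3) (Fin n) ℂ | A.rank = 3} := by
  simp_rw [rank3_iff]
  exact isOpen_setOfPred_linearIndependent (𝕜 := ℂ) (E := Fin n → ℂ) (ι := Fin 3)

lemma card_sym32 : Fintype.card (Sym (Fin 3) 2) = 6 := by
  rw [Sym.card_sym_eq_choose]; simp; rfl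

lemma quad_rank_iff {n : ℕ} (A : Matrix (Fin 3) (Fin n) ℂ) :
    (quadOf A).rank ≤ 5 ↔ ¬ LinearIndependent ℂ (fun i => quadOf A i) := by
  rw [← rank_eq_card_iff, card_sym32]
  have := Matrix.rank_le_card_height (quadOf A)
  rw [card_sym32] at this
  omega

lemma isClosed_quad (n : ℕ) :
    IsClosed {A : Matrix (Fin 3) (Fin n) ℂ | (quadOf A).rank ≤ 5} := by
  simp_rw [quad_rank_iff]
  have h : IsOpen {f : Sym (Fin 3) 2 → (Fin n → ℂ) | LinearIndependent ℂ f} :=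
    isOpen_setOfPred_linearIndependent
  have hc : Continuous (fun A : Matrix (Fin 3) (Fin n) ℂ =>
      (fun i => quadOf A i : Sym (Fin 3) 2 → (Fin n → ℂ))) := by
    refine continuous_pi fun s => continuous_pi fun j => ?_
    simp only [quadOf, Matrix.of_apply]
    refine continuous_multiset_prod _ fun i _ => ?_
    exact (continuous_apply j).comp (continuous_apply i)
  have := (h.preimage hc).isClosed_compl
  exact this

/-- An explicit enumeration of the quadratic monomials in three variables. -/
def enum6 : Fin 6 → Sym (Fin 3) 2 :=
  ![⟨{0, 0}, rfl⟩, ⟨{1, 1}, rfl⟩, ⟨{2, 2}, rfl⟩, ⟨{0, 1}, rfl⟩, ⟨{0, 2}, rfl⟩, ⟨{1, 2}, rfl⟩]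

lemma enum6_bij : Function.Bijective enum6 := by
  rw [Fintype.bijective_iff_injective_and_card, card_sym32]
  refine ⟨by decide, by simp⟩

lemma quad_sum {n : ℕ} (A : Matrix (Fin 3) (Fin n) ℂ) (c : Sym (Fin 3) 2 → ℂ) (j : Fin n) :
    ∑ s, c s * quadOf A s j =
      c (enum6 0) * (A 0 j * A 0 j) + c (enum6 1) * (A 1 j * A 1 j) + c (enum6 2) * (A 2 j * A 2 j)
      + c (enum6 3) * (A 0 j * A 1 j) + c (enum6 4) * (A 0 j * A 2 j)
      + c (enum6 5) * (A 1 j * A 2 j) := by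
  rw [← enum6_bij.sum_comp, Fin.sum_univ_six]
  have h : ∀ s, quadOf A s j = ((s : Multiset (Fin 3)).map fun i => A i j).prod := fun s => rfl
  simp only [h]
  simp [enum6]

/-- The value of the quadratic form with matrix `G`. -/
noncomputable def qv (G : Matrix (Fin 3) (Fin 3) ℂ) (v : Fin 3 → ℂ) : ℂ := v ⬝ᵥ (G *ᵥ v)

lemma qv_expand (G : Matrix (Fin 3) (Fin 3) ℂ) (v : Fin 3 → ℂ) :
    qv G v = G 0 0 * (v 0 * v 0) + G 1 1 * (v 1 * v 1) + G 2 2 * (v 2 * v 2)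
      + (G 0 1 + G 1 0) * (v 0 * v 1) + (G 0 2 + G 2 0) * (v 0 * v 2)
      + (G 1 2 + G 2 1) * (v 1 * v 2) := by
  simp [qv, dotProduct, mulVec, Fin.sum_univ_three]; ring

lemma quad_rank_iff' {n : ℕ} (A : Matrix (Fin 3) (Fin n) ℂ) :
    (quadOf A).rank ≤ 5 ↔ ∃ G : Matrix (Fin 3) (Fin 3) ℂ, (∃ v, qv G v ≠ 0) ∧
      ∀ j, qv G (fun i => A i j) = 0 := by
  rw [quad_rank_iff, Fintype.not_linearIndependent_iff]
  constructor
  · rintro ⟨c, hc, s, hs⟩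
    refine ⟨!![c (enum6 0), c (enum6 3), c (enum6 4); 0, c (enum6 1), c (enum6 5);
      0, 0, c (enum6 2)], ?_, ?_⟩
    · by_contra! h
      simp only [qv_expand] at h
      have h0 := h ![1, 0, 0]
      have h1 := h ![0, 1, 0]
      have h2 := h ![0, 0, 1]
      have h3 := h ![1, 1, 0]
      have h4 := h ![1, 0, 1]
      have h5 := h ![0, 1, 1]
      simp at h0 h1 h2 h3 h4 h5
      simp [h0, h1, h2] at h3 h4 h5
      obtain ⟨k, rfl⟩ := enum6_bij.2 s
      fin_cases k <;> simp_all
    · intro j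
      have := congrFun hc j
      simp only [Finset.sum_apply, Pi.smul_apply, smul_eq_mul, Pi.zero_apply] at this
      rw [quad_sum] at this
      rw [qv_expand]
      refine Eq.trans ?_ this
      simp
  · rintro ⟨G, ⟨v, hv⟩, h⟩
    let d : Fin 6 → ℂ := ![G 0 0, G 1 1, G 2 2, G 0 1 + G 1 0, G 0 2 + G 2 0, G 1 2 + G 2 1]
    let e := Equiv.ofBijective enum6 enum6_bij
    have hd : ∀ k, d (e.symm (enum6 k)) = d k := fun k => by
      congr 1; exact e.symm_apply_apply k
    refine ⟨fun s => d (e.symm s), ?_, ?_⟩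
    · ext j
      simp only [Finset.sum_apply, Pi.smul_apply, smul_eq_mul, Pi.zero_apply]
      rw [quad_sum]
      simp only [hd]
      rw [← h j, qv_expand]
      simp [d]
    · by_contra! h0
      have h1 : ∀ k, d k = 0 := fun k => by rw [← hd]; exact h0 _
      apply hv
      have a0 := h1 0
      have a1 := h1 1
      have a2 := h1 2
      have a3 := h1 3
      have a4 := h1 4
      have a5 := h1 5
      simp [d] at a0 a1 a2 a3 a4 a5
      rw [qv_expand, a0, a1, a2, a3, a4, a5]; ring

lemma rowSpan_mul_le {n : ℕ} (P : Matrix (Fin 3) (Fin 3) ℂ) (A : Matrix (Fin 3) (Fin n) ℂ) :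
    rowSpan (P * A) ≤ rowSpan A := by
  refine Submodule.span_le.2 ?_
  rintro _ ⟨i, rfl⟩
  refine (Submodule.mem_span_range_iff_exists_fun ℂ).2 ⟨P i, ?_⟩
  ext j
  simp [Matrix.mul_apply]

lemma rowSpan_mul {n : ℕ} {P : Matrix (Fin 3) (Fin 3) ℂ} (hP : IsUnit P.det)
    (A : Matrix (Fin 3) (Fin n) ℂ) : rowSpan (P * A) = rowSpan A := by
  refine le_antisymm (rowSpan_mul_le P A) ?_
  have := rowSpan_mul_le P⁻¹ (P * A)
  rwa [← Matrix.mul_assoc, Matrix.nonsing_inv_mul _ hP, Matrix.one_mul] at this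

lemma exists_mul_of_rowSpan_le {n : ℕ} {A B : Matrix (Fin 3) (Fin n) ℂ}
    (h : rowSpan B ≤ rowSpan A) : ∃ P : Matrix (Fin 3) (Fin 3) ℂ, B = P * A := by
  have : ∀ i, ∃ c : Fin 3 → ℂ, ∑ k, c k • A k = B i := fun i =>
    (Submodule.mem_span_range_iff_exists_fun ℂ).1 (h (Submodule.subset_span ⟨i, rfl⟩))
  choose P hP using this
  refine ⟨Matrix.of P, ?_⟩
  ext i j
  rw [← hP i]
  simp [Matrix.mul_apply]

/-- The representatives of the image of the Veronese map. -/
def VS (n : ℕ) : Set (Matrix (Fin 3) (Fin n) ℂ) :=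
  {B : Matrix (Fin 3) (Fin n) ℂ | B.rank = 3 ∧
          ∃ M : Matrix (Fin 2) (Fin n) ℂ, M.rank = 2 ∧ rowSpan B = rowSpan (ver2 M)}

lemma rank_of_ver2 {n : ℕ} (M : Matrix (Fin 2) (Fin n) ℂ) (h : (ver2 M).rank = 3) :
    M.rank = 2 := by
  have h2 := rank_eq_card_iff M
  rw [Fintype.card_fin] at h2
  rw [h2]
  rw [rank3_iff] at h
  rw [Fintype.linearIndependent_iff] at h ⊢
  intro g hg
  have hj : ∀ j, g 0 * M 0 j + g 1 * M 1 j = 0 := fun j => by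
    simpa [Fin.sum_univ_two] using congrFun hg j
  have := h ![g 0, g 1, 0] (by
    ext j
    simp [Fin.sum_univ_three, ver2]
    linear_combination M 0 j * hj j)
  intro i
  fin_cases i
  · simpa using this 0
  · simpa using this 1

lemma VS_mul {n : ℕ} {P : Matrix (Fin 3) (Fin 3) ℂ} (hP : IsUnit P.det)
    {A : Matrix (Fin 3) (Fin n) ℂ} (h : A ∈ VS n) : P * A ∈ VS n := by
  obtain ⟨h1, M, h2, h3⟩ := h
  exact ⟨by rw [Matrix.rank_mul_eq_right_of_isUnit_det _ _ hP, h1], M, h2,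
    by rw [rowSpan_mul hP, h3]⟩

lemma closure_VS_mul {n : ℕ} {P : Matrix (Fin 3) (Fin 3) ℂ} (hP : IsUnit P.det)
    {A : Matrix (Fin 3) (Fin n) ℂ} (h : P * A ∈ closure (VS n)) : A ∈ closure (VS n) := by
  have hc : Continuous (fun B : Matrix (Fin 3) (Fin n) ℂ => P⁻¹ * B) := by fun_prop
  have := map_mem_closure hc h (t := VS n) (fun B hB =>
    VS_mul (Matrix.isUnit_nonsing_inv_det _ hP) hB)
  rwa [← Matrix.mul_assoc, Matrix.nonsing_inv_mul _ hP, Matrix.one_mul] at this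

lemma VS_quad {n : ℕ} {B : Matrix (Fin 3) (Fin n) ℂ} (h : B ∈ VS n) : (quadOf B).rank ≤ 5 := by
  obtain ⟨h1, M, h2, h3⟩ := h
  obtain ⟨P, hP⟩ := exists_mul_of_rowSpan_le h3.ge
  rw [quad_rank_iff']
  let G0 : Matrix (Fin 3) (Fin 3) ℂ := !![0, 0, 1; 0, -1, 0; 0, 0, 0]
  have hq : ∀ v, qv (Pᵀ * G0 * P) v = qv G0 (P *ᵥ v) := fun v => by
    simp only [qv, ← Matrix.mulVec_mulVec]
    rw [Matrix.dotProduct_mulVec, Matrix.vecMul_transpose]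
  have hPu : IsUnit P.det := by
    obtain ⟨R, hR⟩ := exists_mul_of_rowSpan_le h3.le
    have hB : (1 : Matrix (Fin 3) (Fin 3) ℂ) = R * P := by
      rw [hP, ← Matrix.mul_assoc] at hR
      rw [rank3_iff] at h1
      have := Matrix.vecMul_injective_iff.2 h1
      ext i j
      have hi : Pi.single i 1 ᵥ* B = (R * P) i ᵥ* B := by
        rw [Matrix.single_one_vecMul]
        exact congrFun hR i
      rw [← congrFun (this hi) j, Matrix.one_apply, Pi.single_apply]
      simp only [eq_comm]
    have := congrArg Matrix.det hB
    rw [Matrix.det_one, Matrix.det_mul] at this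
    exact IsUnit.of_mul_eq_one_right _ this.symm
  refine ⟨Pᵀ * G0 * P, ⟨P⁻¹ *ᵥ ![0, 1, 0], ?_⟩, fun j => ?_⟩
  · rw [hq, Matrix.mulVec_mulVec, Matrix.mul_nonsing_inv _ hPu, Matrix.one_mulVec, qv_expand]
    simp [G0]
  · rw [hq]
    have : P *ᵥ (fun i => B i j) = fun i => ver2 M i j := by
      ext i; rw [hP]; rfl
    rw [this, qv_expand]
    simp [G0, ver2]; ring

lemma VS_of_conic {n : ℕ} {B : Matrix (Fin 3) (Fin n) ℂ} (h : B.rank = 3)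
    {k : ℂ} (hk : k ≠ 0) (hB : ∀ j, B 0 j * B 1 j = k ^ 2 * B 2 j ^ 2) : B ∈ VS n := by
  have hs : ∀ z : ℂ, ∃ y, y * y = z := fun z => by
    obtain ⟨y, hy⟩ := IsAlgClosed.exists_eq_mul_self z
    exact ⟨y, hy.symm⟩
  have : ∀ j, ∃ x y : ℂ, x * x = B 0 j ∧ y * y = B 1 j ∧ x * y = k * B 2 j := by
    intro j
    obtain ⟨x, hx⟩ := hs (B 0 j)
    by_cases h0 : x = 0
    · obtain ⟨y, hy⟩ := hs (B 1 j)
      refine ⟨x, y, hx, hy, ?_⟩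
      have := hB j
      rw [← hx, h0] at this
      have h3 : (k * B 2 j) ^ 2 = 0 := by linear_combination -this
      rw [h0, pow_eq_zero_iff (by norm_num) |>.1 h3]; ring
    · refine ⟨x, k * B 2 j / x, hx, ?_, by field_simp⟩
      have := hB j
      rw [← hx] at this
      field_simp
      linear_combination -this
  choose x y h1 h2 h3 using this
  let P : Matrix (Fin 3) (Fin 3) ℂ := !![1, 0, 0; 0, 0, k; 0, 1, 0]
  have hP : IsUnit P.det := by
    simp [P, Matrix.det_fin_three, hk]
  have hv : P * B = ver2 (Matrix.of ![x, y]) := by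
    ext i j
    fin_cases i <;> simp [P, ver2, Matrix.mul_apply, Fin.sum_univ_three, h1, h2, h3]
  refine ⟨h, _, rank_of_ver2 _ ?_, by rw [← hv, rowSpan_mul hP]⟩
  rw [← hv, Matrix.rank_mul_eq_right_of_isUnit_det _ _ hP, h]

lemma closure_of_lines {n : ℕ} {B : Matrix (Fin 3) (Fin n) ℂ} (h : B.rank = 3)
    (hB : ∀ j, B 0 j * B 1 j = 0) : B ∈ closure (VS n) := by
  classical
  let p : ℂ → Fin n → ℂ := fun s j => if B 0 j = 0 then
    (if B 1 j = 0 then s * B 2 j else s ^ 2 * B 2 j ^ 2 / B 1 j) else B 0 j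
  let q : ℂ → Fin n → ℂ := fun s j => if B 0 j = 0 then
    (if B 1 j = 0 then s * B 2 j else B 1 j) else s ^ 2 * B 2 j ^ 2 / B 0 j
  let C : ℂ → Matrix (Fin 3) (Fin n) ℂ := fun s => Matrix.of ![p s, q s, B 2]
  have hC : Continuous C := by
    refine continuous_pi fun i => continuous_pi fun j => ?_
    fin_cases i
    · simp only [C, p]
      simp
      split_ifs <;> fun_prop
    · simp only [C, q]
      simp
      split_ifs <;> fun_prop
    · simp [C]
      fun_prop
  have h0 : C 0 = B := by
    ext i j
    have := hB j
    fin_cases i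
    · simp [C, p]
      grind
    · simp [C, q]
      grind
    · simp [C]
  have hmem : ∀ᶠ s in nhdsWithin (0 : ℂ) {0}ᶜ, C s ∈ VS n := by
    have h1 : ∀ᶠ s in nhds (0 : ℂ), (C s).rank = 3 :=
      ((isOpen_rank3 n).preimage hC).mem_nhds (by simp [h0, h])
    filter_upwards [nhdsWithin_le_nhds h1, self_mem_nhdsWithin] with s hs hs0
    refine VS_of_conic hs (k := s) hs0 fun j => ?_
    simp [C, p, q]
    split_ifs <;> field_simp
  have ht : Filter.Tendsto C (nhdsWithin (0 : ℂ) {0}ᶜ) (nhds B) := by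
    have := hC.tendsto 0
    rw [h0] at this
    exact this.mono_left nhdsWithin_le_nhds
  exact mem_closure_of_tendsto ht hmem

lemma closure_of_diag {n : ℕ} {A : Matrix (Fin 3) (Fin n) ℂ} (h : A.rank = 3)
    {a b c : ℂ} (ha : a ≠ 0) (hb : b ≠ 0)
    (hA : ∀ j, a * A 0 j ^ 2 + b * A 1 j ^ 2 + c * A 2 j ^ 2 = 0) : A ∈ closure (VS n) := by
  obtain ⟨s, hs⟩ := IsAlgClosed.exists_eq_mul_self a
  obtain ⟨t, ht⟩ := IsAlgClosed.exists_eq_mul_self b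
  obtain ⟨k, hk⟩ := IsAlgClosed.exists_eq_mul_self (-c)
  have hs0 : s ≠ 0 := by rintro rfl; simp_all
  have ht0 : t ≠ 0 := by rintro rfl; simp_all
  let P : Matrix (Fin 3) (Fin 3) ℂ :=
    !![s, Complex.I * t, 0; s, - Complex.I * t, 0; 0, 0, 1]
  have hP : IsUnit P.det := by
    have : P.det = -2 * Complex.I * s * t := by
      simp [P, Matrix.det_fin_three]; ring
    rw [this]
    simp [hs0, ht0]
  have hr : (P * A).rank = 3 := by rw [Matrix.rank_mul_eq_right_of_isUnit_det _ _ hP, h]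
  have hq : ∀ j, (P * A) 0 j * (P * A) 1 j = k ^ 2 * (P * A) 2 j ^ 2 := by
    intro j
    simp [P, Matrix.mul_apply, Fin.sum_univ_three]
    linear_combination hA j - A 0 j ^ 2 * hs - A 1 j ^ 2 * ht + A 2 j ^ 2 * hk
      - t ^ 2 * A 1 j ^ 2 * Complex.I_sq
  apply closure_VS_mul hP
  by_cases hk0 : k = 0
  · exact closure_of_lines hr fun j => by rw [hq, hk0]; ring
  · exact subset_closure (VS_of_conic hr hk0 hq)

lemma diagonalize (G : Matrix (Fin 3) (Fin 3) ℂ) : ∃ (P : Matrix (Fin 3) (Fin 3) ℂ)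
    (w : Fin 3 → ℂ), IsUnit P.det ∧ ∀ v, qv G v = ∑ i, w i * (P *ᵥ v) i ^ 2 := by
  have key : ∀ m (_ : m = 3) (w : Fin m → ℂ), QuadraticMap.Equivalent G.toQuadraticForm'
      (QuadraticMap.weightedSumSquares ℂ w) → ∃ w : Fin 3 → ℂ,
      QuadraticMap.Equivalent G.toQuadraticForm' (QuadraticMap.weightedSumSquares ℂ w) := by
    rintro m rfl w h
    exact ⟨w, h⟩
  obtain ⟨w0, hw0⟩ := QuadraticForm.equivalent_weightedSumSquares G.toQuadraticForm'
  obtain ⟨w, ⟨e⟩⟩ := key _ (by simp) w0 hw0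
  refine ⟨LinearMap.toMatrix' e.toLinearEquiv.toLinearMap, w, ?_, fun v => ?_⟩
  · rw [LinearMap.det_toMatrix']
    exact LinearEquiv.isUnit_det' _
  · have := e.map_app v
    rw [QuadraticMap.weightedSumSquares_apply] at this
    have hG : G.toQuadraticForm' v = qv G v := by
      simp [Matrix.toQuadraticForm', qv, Matrix.toLinearMap₂'_apply']
    rw [← hG, ← this]
    rw [LinearMap.toMatrix'_mulVec]
    simp [pow_two]

lemma perm_closure {n : ℕ} {A : Matrix (Fin 3) (Fin n) ℂ} (σ : Equiv.Perm (Fin 3))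
    (h : A.submatrix σ id ∈ closure (VS n)) : A ∈ closure (VS n) := by
  refine closure_VS_mul (P := σ.toPEquiv.toMatrix) ?_ ?_
  · change IsUnit (Equiv.Perm.permMatrix ℂ σ).det
    rw [Matrix.det_permutation]
    exact (Units.isUnit _).map (Int.castRingHom ℂ)
  · rwa [PEquiv.toMatrix_toPEquiv_mul]

lemma no_zero_row {n : ℕ} {A : Matrix (Fin 3) (Fin n) ℂ} (h : A.rank = 3) (i : Fin 3) :
    ∃ j, A i j ≠ 0 := by
  rw [rank3_iff] at h
  by_contra! h0
  exact h.ne_zero i (funext h0)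

lemma closure_of_quad {n : ℕ} {A : Matrix (Fin 3) (Fin n) ℂ} (h : A.rank = 3)
    (hq : (quadOf A).rank ≤ 5) : A ∈ closure (VS n) := by
  obtain ⟨G, ⟨v, hv⟩, hA⟩ := (quad_rank_iff' A).1 hq
  obtain ⟨P, w, hP, hw⟩ := diagonalize G
  apply closure_VS_mul hP
  have hr : (P * A).rank = 3 := by rw [Matrix.rank_mul_eq_right_of_isUnit_det _ _ hP, h]
  have hB : ∀ j, ∑ i, w i * (P * A) i j ^ 2 = 0 := fun j => by
    rw [← hA j, hw]; rfl
  have hw0 : w ≠ 0 := by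
    rintro rfl
    exact hv (by simp [hw])
  generalize P * A = B at hr hB
  simp only [Fin.sum_univ_three] at hB
  obtain ⟨j0, hj0⟩ := no_zero_row hr 0
  obtain ⟨j1, hj1⟩ := no_zero_row hr 1
  obtain ⟨j2, hj2⟩ := no_zero_row hr 2
  have hrp : ∀ σ : Equiv.Perm (Fin 3), (B.submatrix σ id).rank = 3 := fun σ => by
    exact (Matrix.rank_submatrix B σ (Equiv.refl _)).trans hr
  have e0 := hB j0
  have e1 := hB j1
  have e2 := hB j2
  have hne : ¬ (w 0 = 0 ∧ w 1 = 0 ∧ w 2 = 0) := fun ⟨a, b, c⟩ => hw0 (by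
    ext i; fin_cases i <;> simp [a, b, c])
  by_cases h0 : w 0 = 0
  · have h1 : w 1 ≠ 0 := by intro h1; simp_all
    have h2 : w 2 ≠ 0 := by intro h2; simp_all
    refine perm_closure (Equiv.swap 0 2) (closure_of_diag (hrp _) h2 h1 (c := w 0) fun j => ?_)
    have h3 : (Equiv.swap (0 : Fin 3) 2) 1 = 1 := by decide
    simp [h3]
    linear_combination hB j
  · by_cases h1 : w 1 = 0
    · have h2 : w 2 ≠ 0 := by intro h2; simp_all
      refine perm_closure (Equiv.swap 1 2) (closure_of_diag (hrp _) h0 h2 (c := w 1) fun j => ?_)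
      have h3 : (Equiv.swap (1 : Fin 3) 2) 0 = 0 := by decide
      simp [h3]
      linear_combination hB j
    · exact closure_of_diag hr h0 h1 hB

/-- For `n ≥ 3`, the ABCT variety `V(3,n) ⊆ G(3,n)` — the
closure of the image of the quadratic Veronese map `θ₂ : G(2,n) ⇢ G(3,n)` —
coincides, as a subvariety of the Grassmannian, with the degeneracy locus
`Z₂(3,n)` of subspaces whose representing `3×n` matrices have columnwise
quadratic Veronese matrix of rank at most `5`.  The Grassmannian is modeled as
row spans of full-rank matrices; the closure is taken in the space of `3×n`
complex matrices (for the image of a polynomial map, the Zariski closure of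
the constructible image agrees with this closure). -/
theorem V3n_eq_Z23n (n : ℕ) (hn : 3 ≤ n) :
    {W : Submodule ℂ (Fin n → ℂ) | ∃ A : Matrix (Fin 3) (Fin n) ℂ,
        A.rank = 3 ∧ rowSpan A = W ∧
        A ∈ closure {B : Matrix (Fin 3) (Fin n) ℂ | B.rank = 3 ∧
          ∃ M : Matrix (Fin 2) (Fin n) ℂ, M.rank = 2 ∧ rowSpan B = rowSpan (ver2 M)}} =
    {W : Submodule ℂ (Fin n → ℂ) | ∃ A : Matrix (Fin 3) (Fin n) ℂ,
        A.rank = 3 ∧ rowSpan A = W ∧ (quadOf A).rank ≤ 5} := by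

  ext W
  constructor
  · rintro ⟨A, h1, h2, h3⟩
    refine ⟨A, h1, h2, ?_⟩
    have : closure (VS n) ⊆ {A : Matrix (Fin 3) (Fin n) ℂ | (quadOf A).rank ≤ 5} :=
      closure_minimal (fun B hB => VS_quad hB) (isClosed_quad n)
    exact this h3
  · rintro ⟨A, h1, h2, h3⟩
    exact ⟨A, h1, h2, closure_of_quad h1 h3⟩
end
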